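/- Let α_1 ≤ α_2, α ≥ 0, w = (w_j)_{j∈ℕ_0} ∈ W^α_{α_1,α_2} an admissible weight sequence. Let ψ_0, ψ_1 ∈ S(ℝ^n) satisfy |ψ_0(x)| > 0 on {|x| ≤ kε} and |ψ_1(x)| > 0 on {ε ≤ |x| ≤ 2kε} for some ε > 0 and k ∈ (1,2]; set ψ_j(x) := ψ_1(2^{−j+1}x) for j ≥ 2 and Ψ_j := ψ̂_j. Let t > 0, N ∈ ℕ_0 and a with α < a ≤ N, and set η_{j,s}(x) := 2^{jn}(1+2^j|x|)^{−s}. Then there is c > 0 such that for every f ∈ S'(ℝ^n), every ν ∈ ℕ_0 and every x ∈ ℝ^n: ((Ψ_ν^* f)_a(x))^t (w_ν(x))^t ≤ c ∑_{j=ν}^∞ 2^{−(j−ν)(N−a+α_1)t} ( η_{j,(a−α)t} ∗ (|Ψ_j ∗ f| w_j)^t )(x). -/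

import Mathlib

open MeasureTheory ENNReal Real
open scoped FourierTransform

noncomputable section

/-- Euclidean space `ℝ^n`. -/
abbrev Rn (n : ℕ) : Type := EuclideanSpace ℝ (Fin n)

variable {n : ℕ}

/-- The function `φ_t(s)` used in the semimodular of variable exponent Lebesgue spaces:
`φ_t(s) = s^t` for `t < ∞`, while `φ_∞(s) = 0` for `s ≤ 1` and `= ∞` for `s > 1`. -/
def phiVE (t : ℝ≥0∞) (s : ℝ≥0∞) : ℝ≥0∞ :=
  if t = ∞ then (if s ≤ 1 then 0 else ∞) else s ^ t.toReal

/-- The semimodular `ρ_p` of variable exponent Lebesgue spaces. -/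
def modularVE (p : Rn n → ℝ≥0∞) (g : Rn n → ℝ≥0∞) : ℝ≥0∞ :=
  ∫⁻ x, phiVE (p x) (g x)

/-- The variable exponent Lebesgue quasi-norm `‖·‖_{L^{p(·)}(ℝ^n)}`, applied to the
(pointwise) absolute value of a function, i.e. to `[0,∞]`-valued functions.
(For `p⁻ ≥ 1` this is the usual Luxemburg norm; for general `p` it agrees with the
definition via `‖f‖ = ‖|f|^t‖_{L^{p/t}}^{1/t}`.) -/
def vLpNorm (p : Rn n → ℝ≥0∞) (g : Rn n → ℝ≥0∞) : ℝ≥0∞ :=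
  sInf {lam : ℝ≥0∞ | modularVE p (fun x => g x / lam) ≤ 1}

/-- A variable exponent: a measurable function `p : ℝ^n → (0,∞]` with `p⁻ = ess inf p > 0`. -/
def IsVarExp (p : Rn n → ℝ≥0∞) : Prop :=
  Measurable p ∧ (∀ x, 0 < p x) ∧ 0 < essInf p (volume : Measure (Rn n))

/-- Local log-Hölder continuity of `g : ℝ^n → ℝ`. -/
def LocLogHolder (g : Rn n → ℝ) : Prop :=
  ∃ c > 0, ∀ x y : Rn n, |g x - g y| ≤ c / Real.log (Real.exp 1 + (dist x y)⁻¹)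

/-- Log-Hölder decay of `g` at infinity, with limit value `gInf` and constant `c`. -/
def LogDecay (g : Rn n → ℝ) (gInf c : ℝ) : Prop :=
  ∀ x : Rn n, |g x - gInf| ≤ c / Real.log (Real.exp 1 + ‖x‖)

/-- `p ∈ P^log(ℝ^n)`, with prescribed limit value `pinvInf = 1/p_∞` of `1/p` at infinity. -/
def IsPLogWith (p : Rn n → ℝ≥0∞) (pinvInf : ℝ) : Prop :=
  IsVarExp p ∧ LocLogHolder (fun x => (p x)⁻¹.toReal) ∧
    ∃ c > 0, LogDecay (fun x => (p x)⁻¹.toReal) pinvInf c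

/-- `p ∈ P^log(ℝ^n)`. -/
def IsPLog (p : Rn n → ℝ≥0∞) : Prop := ∃ pinvInf : ℝ, IsPLogWith p pinvInf

/-- The Morrey quasi-norm `‖·‖_{M^{u(·)}_{p(·)}(ℝ^n)}` of a `[0,∞]`-valued function:
`sup_{x, r>0} r^{n(1/u(x) - 1/p(x))} ‖f‖_{L^{p(·)}(B_r(x))}`. -/
def morreyNorm (p u : Rn n → ℝ≥0∞) (g : Rn n → ℝ≥0∞) : ℝ≥0∞ :=
  ⨆ (x : Rn n) (r : ℝ) (_ : 0 < r),
    ENNReal.ofReal (r ^ ((n : ℝ) * ((u x)⁻¹.toReal - (p x)⁻¹.toReal))) *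
      vLpNorm p ((Metric.ball x r).indicator g)

/-- The `ℓ^q` (quasi-)norm of a sequence in `[0,∞]`, with the usual modification for `q = ∞`. -/
def lqNorm (q : ℝ≥0∞) (a : ℕ → ℝ≥0∞) : ℝ≥0∞ :=
  if q = ∞ then ⨆ ν, a ν else (∑' ν, a ν ^ q.toReal) ^ (1 / q.toReal)

/-- The vector-valued Morrey quasi-norm `‖(f_ν)_ν‖_{M^{u(·)}_{p(·)}(ℓ^{q(·)})}`. -/
def morreySeqNorm (p u q : Rn n → ℝ≥0∞) (f : ℕ → Rn n → ℝ≥0∞) : ℝ≥0∞ :=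
  morreyNorm p u (fun x => lqNorm (q x) (fun ν => f ν x))

/-- The kernel `η_{ν,m}(x) = 2^{νn} (1 + 2^ν |x|)^{-m}`. -/
def etaK (ν : ℕ) (m : ℝ) (x : Rn n) : ℝ≥0∞ :=
  ENNReal.ofReal ((2 : ℝ) ^ (ν * n) * (1 + 2 ^ ν * ‖x‖) ^ (-m))

/-- Convolution of `[0,∞]`-valued functions. -/
def lconv (f g : Rn n → ℝ≥0∞) (x : Rn n) : ℝ≥0∞ := ∫⁻ y, f (x - y) * g y

/-- The constant `c_{p,u} = max(0, sup_x (1/p(x) - 1/u(x)) - 1/p_∞)`. -/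
def cpu (p u : Rn n → ℝ≥0∞) (pinvInf : ℝ) : ℝ :=
  max 0 ((⨆ x : Rn n, ((p x)⁻¹.toReal - (u x)⁻¹.toReal)) - pinvInf)

/-- Tempered distributions on `ℝ^n`. -/
abbrev TemperedDist (n : ℕ) : Type := SchwartzMap (Rn n) ℂ →L[ℂ] ℂ

lemma hasTemperateGrowth_reflectTranslate (y : Rn n) :
    Function.HasTemperateGrowth (fun z : Rn n => y - z) := by
  have hd : Differentiable ℝ (fun z : Rn n => y - z) :=
    (differentiable_const y).sub differentiable_id
  have hfd : fderiv ℝ (fun z : Rn n => y - z)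
      = fun _ => -(ContinuousLinearMap.id ℝ (Rn n)) := by
    funext z
    rw [fderiv_const_sub, fderiv_id']
  refine Function.HasTemperateGrowth.of_fderiv (k := 1) (C := ‖y‖ + 1) ?_ hd ?_
  · rw [hfd]; exact .const _
  · intro x
    calc ‖y - x‖ ≤ ‖y‖ + ‖x‖ := norm_sub_le _ _
      _ ≤ (‖y‖ + 1) * (1 + ‖x‖) ^ 1 := by
          have h1 := norm_nonneg x
          have h2 := norm_nonneg y
          nlinarith

/-- The map `z ↦ Ψ (y - z)`, as a Schwartz function. -/
def reflectTranslate (y : Rn n) (Ψ : SchwartzMap (Rn n) ℂ) : SchwartzMap (Rn n) ℂ :=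
  SchwartzMap.compCLMOfAntilipschitz (𝕜 := ℂ) (K := 1)
    (hasTemperateGrowth_reflectTranslate y)
    ((Isometry.of_dist_eq (fun z z' => dist_sub_left y z z')).antilipschitz) Ψ

@[simp] lemma reflectTranslate_apply (y : Rn n) (Ψ : SchwartzMap (Rn n) ℂ) (z : Rn n) :
    reflectTranslate y Ψ z = Ψ (y - z) := rfl

/-- The convolution `(Ψ ∗ f)(y) = f(Ψ(y - ·))` of a Schwartz function `Ψ` with a tempered
distribution `f`. -/
def distConv (Ψ : SchwartzMap (Rn n) ℂ) (f : TemperedDist n) (y : Rn n) : ℂ :=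
  f (reflectTranslate y Ψ)

/-- The Peetre maximal function at level `j`, with parameter `a`, of a function `F`
(to be applied with `F = Ψ_j ∗ f`):  `sup_y ‖F y‖ / (1 + |2^j (y - x)|^a)`. -/
def peetreMax (a : ℝ) (j : ℕ) (F : Rn n → ℂ) (x : Rn n) : ℝ≥0∞ :=
  ⨆ y : Rn n, (‖F y‖₊ : ℝ≥0∞) / ENNReal.ofReal (1 + ((2 : ℝ) ^ j * ‖y - x‖) ^ a)

/-- Admissible weight sequences from the class `W^α_{α₁,α₂}`, with constant `C` in
condition (i). -/
def AdmissibleWeights (al al1 al2 C : ℝ) (w : ℕ → Rn n → ℝ) : Prop :=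
  (∀ j, Measurable (w j)) ∧
  (∀ (j : ℕ) (x y : Rn n), 0 < w j x ∧ w j x ≤ C * w j y * (1 + 2 ^ j * ‖x - y‖) ^ al) ∧
  (∀ (j : ℕ) (x : Rn n), 2 ^ al1 * w j x ≤ w (j + 1) x ∧ w (j + 1) x ≤ 2 ^ al2 * w j x)

/-- An admissible pair `(φ̌, Φ̌)`, described through the generating functions `φ, Φ`. -/
def AdmissiblePair (phi Phi : SchwartzMap (Rn n) ℂ) : Prop :=
  (Function.support ⇑phi ⊆ {x : Rn n | 1 / 2 ≤ ‖x‖ ∧ ‖x‖ ≤ 2}) ∧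
  (Function.support ⇑Phi ⊆ {x : Rn n | ‖x‖ ≤ 2}) ∧
  ∃ c > 0, (∀ x : Rn n, 3 / 5 ≤ ‖x‖ → ‖x‖ ≤ 5 / 3 → c ≤ ‖phi x‖) ∧
    (∀ x : Rn n, ‖x‖ ≤ 5 / 3 → c ≤ ‖Phi x‖)

/-!
Telescoping a smooth cut-off `χ` with `χ - χ(2 ·) = θ ψ_1(2 ·)` gives a local reproducing formula
`Ψ_ν ∗ f = ∑_j K_{ν,j} ∗ (Ψ_{ν+j} ∗ f)`: the function `ψ_ν` itself enters the kernel `K_{ν,j}` as a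
factor, so only `θ` has to be divided by `ψ_1`. The kernels decay like `(2^j (1 + 2^ν |x|))^{-A}`
for every `A`, which bounds `|Ψ_ν ∗ f|` by damped sums over all higher scales.

It remains to replace the exponent `1` in these sums by `t`. For `t ≥ 1` this is Hölder's
inequality. For `t < 1`, the damped supremum `M` and the damped sum `S` of `t`-th powers satisfy
`M ≤ C M^{1-t} S`, so that `M^t ≤ C S` once `M` is finite. Since `f` is tempered, `M` is finite for
large damping exponents; feeding the resulting bound back into itself reaches every exponent.
The weights and the Peetre denominator finally turn damped sums into convolutions with `η`.
-/

/-! ### Damped sums and maximal functions -/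

section LebesgueIntegral

variable {α : Type*} [MeasurableSpace α] {μ : Measure α}

/-- Hölder's inequality with exponents `t / (t - 1)` and `t` for the product
`d ^ (1 - t⁻¹) * (d * h ^ t) ^ t⁻¹`. -/
lemma lintegral_mul_rpow_le {t : ℝ} (ht : 1 ≤ t) {d h : α → ℝ≥0∞} (hd : AEMeasurable d μ)
    (hh : AEMeasurable h μ) :
    (∫⁻ z, d z * h z ∂μ) ^ t ≤ (∫⁻ z, d z ∂μ) ^ (t - 1) * ∫⁻ z, d z * h z ^ t ∂μ := by
  have ht0 : 0 < t := one_pos.trans_le ht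
  have hsplit (z : α) : d z ^ (1 - t⁻¹) * (d z * h z ^ t) ^ t⁻¹ = d z * h z := by
    rw [ENNReal.mul_rpow_of_nonneg _ _ (by positivity), ENNReal.rpow_rpow_inv ht0.ne', ← mul_assoc,
      ← ENNReal.rpow_add_of_nonneg _ _ (sub_nonneg.2 (inv_le_one_of_one_le₀ ht)) (by positivity),
      sub_add_cancel, ENNReal.rpow_one]
  have holder := ENNReal.lintegral_mul_norm_pow_le hd (hd.mul (hh.pow_const t))
    (sub_nonneg.2 (inv_le_one_of_one_le₀ ht)) (inv_nonneg.2 ht0.le) (sub_add_cancel 1 t⁻¹)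
  simp only [Pi.mul_apply, hsplit] at holder
  refine (ENNReal.rpow_le_rpow holder ht0.le).trans_eq ?_
  rw [ENNReal.mul_rpow_of_nonneg _ _ ht0.le, ENNReal.rpow_inv_rpow ht0.ne', ← ENNReal.rpow_mul,
    sub_mul, one_mul, inv_mul_cancel₀ ht0.ne']

lemma tsum_lintegral_mul_rpow_le [SFinite μ] {t : ℝ} (ht : 1 ≤ t) {d h : ℕ → α → ℝ≥0∞}
    (hd : ∀ k, Measurable (d k)) (hh : ∀ k, Measurable (h k)) :
    (∑' k, ∫⁻ z, d k z * h k z ∂μ) ^ t ≤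
      (∑' k, ∫⁻ z, d k z ∂μ) ^ (t - 1) * ∑' k, ∫⁻ z, d k z * h k z ^ t ∂μ := by
  have tsum_eq {F : ℕ → α → ℝ≥0∞} (hF : ∀ k, Measurable (F k)) :
      ∑' k, ∫⁻ z, F k z ∂μ = ∫⁻ p, F p.1 p.2 ∂(Measure.count.prod μ) := by
    rw [lintegral_prod _ (measurable_from_prod_countable_right hF).aemeasurable, lintegral_count]
  rw [tsum_eq (F := fun k z => d k z * h k z) fun k => (hd k).mul (hh k), tsum_eq hd,
    tsum_eq (F := fun k z => d k z * h k z ^ t) fun k => (hd k).mul ((hh k).pow_const t)]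
  exact lintegral_mul_rpow_le ht (measurable_from_prod_countable_right hd).aemeasurable
    (measurable_from_prod_countable_right hh).aemeasurable

lemma lintegral_comp_smul {E : Type*} [NormedAddCommGroup E] [NormedSpace ℝ E]
    [FiniteDimensional ℝ E] [MeasurableSpace E] [BorelSpace E] (μ : Measure E)
    [μ.IsAddHaarMeasure] (g : E → ℝ≥0∞) {r : ℝ} (hr : r ≠ 0) :
    ∫⁻ z, g (r • z) ∂μ = ENNReal.ofReal |(r ^ Module.finrank ℝ E)⁻¹| * ∫⁻ z, g z ∂μ := by
  rw [← smul_eq_mul, ← lintegral_smul_measure, ← Measure.map_addHaar_smul μ hr]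
  exact (lintegral_map_equiv g (Homeomorph.smulOfNeZero r hr).toMeasurableEquiv).symm

end LebesgueIntegral

section Damped

variable {E : Type*} [NormedAddCommGroup E] {A : ℕ} {G : ℕ → E → ℝ≥0∞}

/-- The weight `2^k (1 + 2^ν |x|)`, which controls the passage from frequency `2^ν` to frequency
`2^(ν + k)` over the distance `|x|`. -/
def dyadicWeight (ν k : ℕ) (x : E) : ℝ≥0∞ := ENNReal.ofReal (2 ^ k * (1 + 2 ^ ν * ‖x‖))

lemma one_le_dyadicWeight (ν k : ℕ) (x : E) : 1 ≤ dyadicWeight ν k x := by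
  rw [dyadicWeight, ENNReal.one_le_ofReal]
  exact one_le_mul_of_one_le_of_one_le (one_le_pow₀ one_le_two)
    (le_add_of_nonneg_right (by positivity))

lemma dyadicWeight_ne_top (ν k : ℕ) (x : E) : dyadicWeight ν k x ≠ ∞ := ENNReal.ofReal_ne_top

lemma dyadicWeight_ne_zero (ν k : ℕ) (x : E) : dyadicWeight ν k x ≠ 0 :=
  (zero_lt_one.trans_le (one_le_dyadicWeight ν k x)).ne'

lemma inv_dyadicWeight_pow_ne_top (ν k : ℕ) (x : E) (A : ℕ) : (dyadicWeight ν k x ^ A)⁻¹ ≠ ∞ :=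
  ENNReal.inv_ne_top.2 (pow_ne_zero A (dyadicWeight_ne_zero ν k x))

lemma one_add_mul_norm_sub_le {c : ℝ} (hc : 0 ≤ c) (x y z : E) :
    1 + c * ‖x - z‖ ≤ (1 + c * ‖x - y‖) * (1 + c * ‖y - z‖) := by
  have triangle : c * ‖x - z‖ ≤ c * ‖x - y‖ + c * ‖y - z‖ := by
    rw [← mul_add]
    gcongr
    exact norm_sub_le_norm_sub_add_norm_sub x y z
  have cross_nonneg : 0 ≤ c * ‖x - y‖ * (c * ‖y - z‖) := by positivity
  linarith

lemma dyadicWeight_add_le (ν j i : ℕ) (x y z : E) :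
    dyadicWeight ν (j + i) (x - z) ≤
      dyadicWeight ν j (x - y) * dyadicWeight (ν + j) i (y - z) := by
  unfold dyadicWeight
  rw [← ENNReal.ofReal_mul (by positivity)]
  refine ENNReal.ofReal_le_ofReal ?_
  calc (2 : ℝ) ^ (j + i) * (1 + 2 ^ ν * ‖x - z‖)
      ≤ 2 ^ (j + i) * ((1 + 2 ^ ν * ‖x - y‖) * (1 + 2 ^ ν * ‖y - z‖)) := by
        gcongr
        exact one_add_mul_norm_sub_le (by positivity) x y z
    _ ≤ 2 ^ (j + i) * ((1 + 2 ^ ν * ‖x - y‖) * (1 + 2 ^ (ν + j) * ‖y - z‖)) := by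
        gcongr
        exacts [one_le_two, ν.le_add_right j]
    _ = _ := by ring

/-- The member `G_{ν+k}` of a family of functions, damped by `(2^k (1 + 2^ν |x - ·|))^{-A}`. -/
def damped (A : ℕ) (G : ℕ → E → ℝ≥0∞) (ν : ℕ) (x : E) (k : ℕ) (z : E) : ℝ≥0∞ :=
  (dyadicWeight ν k (x - z) ^ A)⁻¹ * G (ν + k) z

/-- The maximal function `sup_{k,z} (2^k (1 + 2^ν |x - z|))^{-A} G_{ν+k}(z)`. -/
def dampedSup (A : ℕ) (G : ℕ → E → ℝ≥0∞) (ν : ℕ) (x : E) : ℝ≥0∞ :=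
  ⨆ (k : ℕ) (z : E), damped A G ν x k z

lemma damped_le_dampedSup (A : ℕ) (G : ℕ → E → ℝ≥0∞) (ν : ℕ) (x : E) (k : ℕ) (z : E) :
    damped A G ν x k z ≤ dampedSup A G ν x := le_iSup₂ (f := fun k z => damped A G ν x k z) k z

lemma le_dampedSup (A : ℕ) (G : ℕ → E → ℝ≥0∞) (ν : ℕ) (x : E) : G ν x ≤ dampedSup A G ν x := by
  simpa [damped, dyadicWeight] using damped_le_dampedSup A G ν x 0 x

lemma damped_anti {A' : ℕ} (h : A ≤ A') (G : ℕ → E → ℝ≥0∞) (ν : ℕ) (x : E) (k : ℕ) (z : E) :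
    damped A' G ν x k z ≤ damped A G ν x k z := by
  unfold damped
  gcongr
  exact one_le_dyadicWeight _ _ _

lemma damped_add (A B : ℕ) (G : ℕ → E → ℝ≥0∞) (ν : ℕ) (x : E) (k : ℕ) (z : E) :
    damped (A + B) G ν x k z = (dyadicWeight ν k (x - z) ^ B)⁻¹ * damped A G ν x k z := by
  rw [damped, damped, ← mul_assoc, ← ENNReal.mul_inv (by simp [dyadicWeight_ne_zero])
    (by simp [dyadicWeight_ne_top]), ← pow_add, add_comm]

lemma inv_dyadicWeight_pow_mul_damped_le (A : ℕ) (G : ℕ → E → ℝ≥0∞) (ν j i : ℕ) (x y z : E) :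
    (dyadicWeight ν j (x - y) ^ A)⁻¹ * damped A G (ν + j) y i z ≤ damped A G ν x (j + i) z := by
  unfold damped
  rw [← mul_assoc, ← ENNReal.mul_inv (by simp [dyadicWeight_ne_zero])
    (by simp [dyadicWeight_ne_top]), ← mul_pow, add_assoc]
  gcongr
  exact dyadicWeight_add_le ν j i x y z

lemma dampedSup_ne_top_of_growth {D : ℝ≥0∞} (hD : D ≠ ∞) {A₀ : ℕ}
    (hG : ∀ m z, G m z ≤ D * dyadicWeight 0 m z ^ A₀) (hA : A₀ ≤ A) (ν : ℕ) (x : E) :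
    dampedSup A G ν x ≠ ∞ := by
  have hbound : D * dyadicWeight 0 ν x ^ A₀ ≠ ∞ :=
    ENNReal.mul_ne_top hD (ENNReal.pow_ne_top (dyadicWeight_ne_top 0 ν x))
  refine ne_top_of_le_ne_top hbound (iSup₂_le fun k z => ?_)
  have hweight : dyadicWeight 0 (ν + k) z ≤ dyadicWeight 0 ν x * dyadicWeight ν k (x - z) := by
    simpa [dyadicWeight] using dyadicWeight_add_le 0 ν k 0 x z
  refine (damped_anti hA G ν x k z).trans ?_
  rw [damped, ENNReal.inv_mul_le_iff (by simp [dyadicWeight_ne_zero])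
    (by simp [dyadicWeight_ne_top]), mul_left_comm, ← mul_pow, mul_comm (dyadicWeight ν k _)]
  exact (hG _ z).trans (by gcongr)

section Measurable

variable [MeasurableSpace E] [BorelSpace E]

lemma measurable_dyadicWeight (ν k : ℕ) : Measurable (dyadicWeight (E := E) ν k) := by
  unfold dyadicWeight
  fun_prop

lemma measurable_damped (A : ℕ) (hG : ∀ m, Measurable (G m)) (ν : ℕ) (x : E) (k : ℕ) :
    Measurable (damped A G ν x k) := by
  unfold damped
  have hweight := measurable_dyadicWeight (E := E) ν k
  have hGk := hG (ν + k)
  fun_prop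

end Measurable

variable [NormedSpace ℝ E] [MeasureSpace E] {t : ℝ}

/-- The sum `∑_k 2^{(ν+k)d} ∫ ((2^k (1 + 2^ν |x - z|))^{-A} G_{ν+k}(z))^t dz`, where `d` is the
dimension of the space. -/
def dampedSum (t : ℝ) (A : ℕ) (G : ℕ → E → ℝ≥0∞) (ν : ℕ) (x : E) : ℝ≥0∞ :=
  ∑' k : ℕ, ∫⁻ z, 2 ^ ((ν + k) * Module.finrank ℝ E) * damped A G ν x k z ^ t

lemma dampedSum_anti (ht : 0 ≤ t) {A' : ℕ} (h : A ≤ A') (G : ℕ → E → ℝ≥0∞) (ν : ℕ) (x : E) :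
    dampedSum t A' G ν x ≤ dampedSum t A G ν x := by
  unfold dampedSum
  gcongr
  exact damped_anti h _ _ _ _ _

lemma inv_dyadicWeight_pow_rpow_mul_dampedSum_le (ht : 0 ≤ t) (A : ℕ) (G : ℕ → E → ℝ≥0∞)
    (ν j : ℕ) (x y : E) :
    ((dyadicWeight ν j (x - y) ^ A)⁻¹) ^ t * dampedSum t A G (ν + j) y ≤ dampedSum t A G ν x := by
  have hfin : ((dyadicWeight ν j (x - y) ^ A)⁻¹) ^ t ≠ ∞ :=
    ENNReal.rpow_ne_top_of_nonneg ht (inv_dyadicWeight_pow_ne_top ν j (x - y) A)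
  unfold dampedSum
  rw [← ENNReal.tsum_mul_left]
  refine le_trans ?_ (ENNReal.tsum_comp_le_tsum_of_injective (add_right_injective j) _)
  gcongr with i
  rw [← lintegral_const_mul' _ _ hfin]
  refine lintegral_mono fun z => ?_
  dsimp only
  rw [mul_left_comm, ← ENNReal.mul_rpow_of_nonneg _ _ ht, add_assoc]
  gcongr
  exact inv_dyadicWeight_pow_mul_damped_le A G ν j i x y z

lemma dampedSum_one_le_dampedSup_rpow_mul (ht : 0 ≤ t) (ht1 : t ≤ 1) {ν : ℕ} {x : E}
    (hfin : dampedSup A G ν x ≠ ∞) :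
    dampedSum 1 A G ν x ≤ dampedSup A G ν x ^ (1 - t) * dampedSum t A G ν x := by
  have ht1' : 0 ≤ 1 - t := sub_nonneg.2 ht1
  unfold dampedSum
  rw [← ENNReal.tsum_mul_left]
  refine ENNReal.tsum_le_tsum fun k => ?_
  rw [← lintegral_const_mul' _ _ (ENNReal.rpow_ne_top_of_nonneg ht1' hfin)]
  refine lintegral_mono fun z => ?_
  dsimp only
  rw [mul_left_comm]
  gcongr
  calc damped A G ν x k z ^ (1 : ℝ)
      = damped A G ν x k z ^ (1 - t) * damped A G ν x k z ^ t := by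
        rw [← ENNReal.rpow_add_of_nonneg _ _ ht1' ht, sub_add_cancel]
    _ ≤ dampedSup A G ν x ^ (1 - t) * damped A G ν x k z ^ t := by
        gcongr
        exact damped_le_dampedSup A G ν x k z

lemma dampedSup_le_rpow_dampedSum (ht : 0 < t) {K : ℝ≥0∞}
    (hG : ∀ ν x, G ν x ^ t ≤ K * dampedSum t A G ν x) (ν : ℕ) (x : E) :
    dampedSup A G ν x ≤ (K * dampedSum t A G ν x) ^ t⁻¹ := by
  refine iSup₂_le fun j y => ?_
  rw [ENNReal.le_rpow_inv_iff ht, damped, ENNReal.mul_rpow_of_nonneg _ _ ht.le]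
  calc ((dyadicWeight ν j (x - y) ^ A)⁻¹) ^ t * G (ν + j) y ^ t
      ≤ ((dyadicWeight ν j (x - y) ^ A)⁻¹) ^ t * (K * dampedSum t A G (ν + j) y) := by
        gcongr
        exact hG (ν + j) y
    _ ≤ K * dampedSum t A G ν x := by
        rw [mul_left_comm]
        gcongr
        exact inv_dyadicWeight_pow_rpow_mul_dampedSum_le ht.le A G ν j x y

lemma rpow_le_of_le_mul_rpow_one_sub (ht : 0 < t) {M S : ℝ≥0∞} (hM : M ≠ ∞)
    (h : M ≤ M ^ (1 - t) * S) : M ^ t ≤ S := by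
  rcases eq_or_ne M 0 with rfl | h0
  · simp [ht]
  calc M ^ t = M ^ (t - 1) * M := by
        conv_rhs => rw [← ENNReal.rpow_one M, ← ENNReal.rpow_mul, ← ENNReal.rpow_add _ _ h0 hM]
        ring_nf
    _ ≤ M ^ (t - 1) * (M ^ (1 - t) * S) := by gcongr
    _ = S := by
        rw [← mul_assoc, ← ENNReal.rpow_add _ _ h0 hM, sub_add_sub_cancel, sub_self,
          ENNReal.rpow_zero, one_mul]

/-- The maximal function `M` satisfies `M ≤ K M^(1 - t) S`, with `S` the damped sum, and `M` can be
cancelled because it is finite. -/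
lemma rpow_le_dampedSum_of_dampedSup_ne_top (ht : 0 < t) (ht1 : t ≤ 1) {K : ℝ≥0∞}
    (hG : ∀ ν x, G ν x ≤ K * dampedSum 1 A G ν x) {ν : ℕ} {x : E}
    (hfin : dampedSup A G ν x ≠ ∞) : G ν x ^ t ≤ K * dampedSum t A G ν x := by
  refine (ENNReal.rpow_le_rpow (le_dampedSup A G ν x) ht.le).trans
    (rpow_le_of_le_mul_rpow_one_sub ht hfin ?_)
  calc dampedSup A G ν x ≤ K * dampedSum 1 A G ν x := by
        simpa using dampedSup_le_rpow_dampedSum one_pos (by simpa using hG) ν x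
    _ ≤ K * (dampedSup A G ν x ^ (1 - t) * dampedSum t A G ν x) := by
        gcongr
        exact dampedSum_one_le_dampedSup_rpow_mul ht.le ht1 hfin
    _ = _ := mul_left_comm _ _ _

/-- The estimate with a larger exponent `A'` shows that the maximal function with exponent `A` is
finite wherever the right-hand side is. -/
lemma rpow_le_dampedSum_of_le_one (ht : 0 < t) (ht1 : t ≤ 1) {A' : ℕ} (hA : A ≤ A') {K K' : ℝ≥0∞}
    (hK' : K' ≠ ∞) (hG : ∀ ν x, G ν x ≤ K * dampedSum 1 A G ν x)
    (hG' : ∀ ν x, G ν x ≤ K' * dampedSum 1 A' G ν x) (hfin : ∀ ν x, dampedSup A' G ν x ≠ ∞)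
    (ν : ℕ) (x : E) : G ν x ^ t ≤ K * dampedSum t A G ν x := by
  rcases eq_or_ne (dampedSum t A G ν x) ∞ with hS | hS
  · rcases eq_or_ne K 0 with rfl | hK
    · simp [nonpos_iff_eq_zero.1 ((hG ν x).trans_eq (zero_mul _)), ht]
    · simp [hS, ENNReal.mul_top hK]
  refine rpow_le_dampedSum_of_dampedSup_ne_top ht ht1 hG (ne_top_of_le_ne_top ?_
    (dampedSup_le_rpow_dampedSum (K := K') ht (fun m y => ?_) ν x))
  · exact ENNReal.rpow_ne_top_of_nonneg (inv_nonneg.2 ht.le) (ENNReal.mul_ne_top hK' hS)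
  · refine (rpow_le_dampedSum_of_dampedSup_ne_top ht ht1 hG' (hfin m y)).trans ?_
    gcongr
    exact dampedSum_anti ht.le hA G m y

variable [BorelSpace E] [FiniteDimensional ℝ E] [(volume : Measure E).IsAddHaarMeasure]

lemma lintegral_inv_dyadicWeight_pow (ν k : ℕ) (x : E) :
    ∫⁻ z, 2 ^ ((ν + k) * Module.finrank ℝ E) *
        (dyadicWeight ν k (x - z) ^ (Module.finrank ℝ E + 1))⁻¹ =
      2⁻¹ ^ k * ∫⁻ z : E, ENNReal.ofReal ((1 + ‖z‖) ^ (-((Module.finrank ℝ E : ℝ) + 1))) := by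
  set d := Module.finrank ℝ E
  set φ : E → ℝ≥0∞ := fun z => ENNReal.ofReal ((1 + ‖z‖) ^ (-((d : ℝ) + 1)))
  have hφ (z : E) : φ ((2 : ℝ) ^ ν • z) = (ENNReal.ofReal (1 + 2 ^ ν * ‖z‖) ^ (d + 1))⁻¹ := by
    rw [← ENNReal.ofReal_pow (by positivity), ← ENNReal.ofReal_inv_of_pos (by positivity)]
    simp only [φ, norm_smul, norm_pow, Real.norm_two]
    rw [Real.rpow_neg (by positivity)]
    norm_cast
  have htwo : (2 : ℝ≥0∞) ^ ((ν + k) * d) * 2⁻¹ ^ (k * (d + 1)) = 2 ^ (ν * d) * 2⁻¹ ^ k := by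
    rw [add_mul, pow_add, mul_add_one, pow_add, mul_assoc, ← mul_assoc (2 ^ (k * d)), ← mul_pow,
      ENNReal.mul_inv_cancel two_ne_zero ENNReal.ofNat_ne_top, one_pow, one_mul]
  have hpt (z : E) : 2 ^ ((ν + k) * d) * (dyadicWeight ν k z ^ (d + 1))⁻¹ =
      2 ^ (ν * d) * 2⁻¹ ^ k * φ ((2 : ℝ) ^ ν • z) := by
    rw [hφ, dyadicWeight, ENNReal.ofReal_mul (by positivity), mul_pow,
      ENNReal.mul_inv (by simp) (by simp), ENNReal.ofReal_pow zero_le_two, ENNReal.ofReal_ofNat,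
      ← pow_mul, ENNReal.inv_pow, ← mul_assoc, htwo]
  have hscale : (2 : ℝ≥0∞) ^ (ν * d) * ENNReal.ofReal |((2 ^ ν) ^ d : ℝ)⁻¹| = 1 := by
    rw [abs_of_pos (by positivity), ENNReal.ofReal_inv_of_pos (by positivity), ← pow_mul,
      ENNReal.ofReal_pow zero_le_two, ENNReal.ofReal_ofNat,
      ENNReal.mul_inv_cancel (by simp) (by simp)]
  calc _ = ∫⁻ z, 2 ^ ((ν + k) * d) * (dyadicWeight ν k z ^ (d + 1))⁻¹ :=
        lintegral_sub_left_eq_self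
          (fun z : E => 2 ^ ((ν + k) * d) * (dyadicWeight ν k z ^ (d + 1))⁻¹) x
    _ = 2 ^ (ν * d) * 2⁻¹ ^ k * ∫⁻ z, φ ((2 : ℝ) ^ ν • z) := by
        simp_rw [hpt]
        exact lintegral_const_mul' _ _ (ENNReal.mul_ne_top (by simp) (by simp))
    _ = _ := by
        rw [lintegral_comp_smul volume φ (by positivity), mul_right_comm, ← mul_assoc, hscale,
          one_mul, mul_comm]

lemma tsum_lintegral_inv_dyadicWeight_pow (ν : ℕ) (x : E) :
    ∑' k : ℕ, ∫⁻ z, 2 ^ ((ν + k) * Module.finrank ℝ E) *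
        (dyadicWeight ν k (x - z) ^ (Module.finrank ℝ E + 1))⁻¹ =
      2 * ∫⁻ z : E, ENNReal.ofReal ((1 + ‖z‖) ^ (-((Module.finrank ℝ E : ℝ) + 1))) := by
  simp_rw [lintegral_inv_dyadicWeight_pow]
  rw [ENNReal.tsum_mul_right, ENNReal.tsum_geometric, ENNReal.one_sub_inv_two, inv_inv]

lemma dampedSum_one_rpow_le (ht : 1 ≤ t) (A : ℕ) (hG : ∀ m, Measurable (G m)) (ν : ℕ) (x : E) :
    dampedSum 1 (A + (Module.finrank ℝ E + 1)) G ν x ^ t ≤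
      (2 * ∫⁻ z : E, ENNReal.ofReal ((1 + ‖z‖) ^ (-((Module.finrank ℝ E : ℝ) + 1)))) ^ (t - 1) *
        dampedSum t A G ν x := by
  have hd (k : ℕ) : Measurable fun z : E => 2 ^ ((ν + k) * Module.finrank ℝ E) *
      (dyadicWeight ν k (x - z) ^ (Module.finrank ℝ E + 1))⁻¹ := by
    have hweight := measurable_dyadicWeight (E := E) ν k
    fun_prop
  have jensen := tsum_lintegral_mul_rpow_le (μ := volume) ht hd fun k =>
    measurable_damped A hG ν x k
  rw [tsum_lintegral_inv_dyadicWeight_pow] at jensen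
  simp only [dampedSum, ENNReal.rpow_one, damped_add, ← mul_assoc]
  refine jensen.trans ?_
  gcongr with k z
  refine mul_le_of_le_one_right' (ENNReal.inv_le_one.2 ?_)
  exact one_le_pow₀ (one_le_dyadicWeight _ _ _)

theorem exists_rpow_le_dampedSum (ht : 0 < t) {C : ℕ → ℝ≥0∞} (hC : ∀ A, C A ≠ ∞) (A : ℕ) :
    ∃ K : ℝ≥0∞, K ≠ ∞ ∧ ∀ G : ℕ → E → ℝ≥0∞, (∀ m, Measurable (G m)) →
      (∀ A ν x, G ν x ≤ C A * dampedSum 1 A G ν x) →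
      (∃ A₀, ∀ A ≥ A₀, ∀ ν x, dampedSup A G ν x ≠ ∞) →
      ∀ ν x, G ν x ^ t ≤ K * dampedSum t A G ν x := by
  rcases le_total t 1 with ht1 | ht1
  · refine ⟨C A, hC A, fun G _ hG ⟨A₀, hA₀⟩ => ?_⟩
    exact rpow_le_dampedSum_of_le_one ht ht1 (le_max_left A A₀) (hC _) (hG A) (hG (max A A₀))
      (hA₀ _ (le_max_right A A₀))
  · set I := ∫⁻ z : E, ENNReal.ofReal ((1 + ‖z‖) ^ (-((Module.finrank ℝ E : ℝ) + 1)))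
    have hI_fin : I ≠ ∞ := (finite_integral_one_add_norm (lt_add_one _)).ne
    set B := A + (Module.finrank ℝ E + 1)
    refine ⟨C B ^ t * (2 * I) ^ (t - 1), ENNReal.mul_ne_top
      (ENNReal.rpow_ne_top_of_nonneg ht.le (hC B)) (ENNReal.rpow_ne_top_of_nonneg (by linarith)
        (ENNReal.mul_ne_top (by simp) hI_fin)), fun G hmeas hG _ ν x => ?_⟩
    calc G ν x ^ t ≤ (C B * dampedSum 1 B G ν x) ^ t := by
          gcongr
          exact hG B ν x
      _ = C B ^ t * dampedSum 1 B G ν x ^ t := ENNReal.mul_rpow_of_nonneg _ _ ht.le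
      _ ≤ C B ^ t * ((2 * I) ^ (t - 1) * dampedSum t A G ν x) := by
          gcongr
          exact dampedSum_one_rpow_le ht1 A hmeas ν x
      _ = _ := (mul_assoc _ _ _).symm

end Damped

/-! ### Admissible weights -/

section Weights

lemma one_add_rpow_le {a s : ℝ} (ha : 0 ≤ a) (hs : 0 ≤ s) :
    (1 + s) ^ a ≤ 2 ^ a * (1 + s ^ a) := by
  rcases le_total s 1 with h | h
  · calc (1 + s) ^ a ≤ 2 ^ a := by gcongr; linarith
      _ ≤ 2 ^ a * (1 + s ^ a) :=
        le_mul_of_one_le_right (by positivity) (le_add_of_nonneg_right (by positivity))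
  · calc (1 + s) ^ a ≤ (2 * s) ^ a := by gcongr; linarith
      _ = 2 ^ a * s ^ a := Real.mul_rpow zero_le_two hs
      _ ≤ 2 ^ a * (1 + s ^ a) := by gcongr; linarith

variable {E : Type*} [NormedAddCommGroup E] {al al1 C : ℝ}

lemma one_add_two_pow_mul_norm_sub_le (ν k : ℕ) (x y z : E) :
    1 + (2 : ℝ) ^ (ν + k) * ‖x - z‖ ≤
      2 ^ k * ((1 + 2 ^ ν * ‖y - z‖) * (1 + 2 ^ ν * ‖y - x‖)) := by
  have hone : (1 : ℝ) ≤ 2 ^ k := one_le_pow₀ one_le_two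
  calc 1 + (2 : ℝ) ^ (ν + k) * ‖x - z‖ ≤ 2 ^ k * (1 + 2 ^ ν * ‖x - z‖) := by
        rw [mul_add, mul_one, pow_add, mul_comm (2 ^ ν), mul_assoc]
        gcongr
    _ ≤ 2 ^ k * ((1 + 2 ^ ν * ‖x - y‖) * (1 + 2 ^ ν * ‖y - z‖)) := by
        gcongr
        exact one_add_mul_norm_sub_le (by positivity) x y z
    _ = _ := by rw [norm_sub_rev x y, mul_comm (1 + 2 ^ ν * ‖y - x‖)]

lemma inv_pow_mul_inv_one_add_rpow_le {N : ℕ} {a : ℝ} (ha : 0 ≤ a) (haN : a ≤ N) (ν k : ℕ)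
    (x y z : E) :
    ((2 ^ k * (1 + 2 ^ ν * ‖y - z‖)) ^ N)⁻¹ * (1 + ((2 : ℝ) ^ ν * ‖y - x‖) ^ a)⁻¹ ≤
      2 ^ a * (2 ^ (-(k : ℝ) * (N - a)) * (1 + 2 ^ (ν + k) * ‖x - z‖) ^ (-a)) := by
  set r := (2 : ℝ) ^ ν * ‖y - z‖
  set s := (2 : ℝ) ^ ν * ‖y - x‖
  set q := 1 + (2 : ℝ) ^ (ν + k) * ‖x - z‖
  have hr : 0 ≤ r := by positivity
  have hs : 0 ≤ s := by positivity
  have hq : 0 < q := by positivity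
  rw [← mul_inv, Real.rpow_neg hq.le, neg_mul, Real.rpow_neg zero_le_two, ← mul_inv,
    ← div_eq_mul_inv, inv_eq_one_div, div_le_div_iff₀ (by positivity) (by positivity), one_mul]
  have hqrs : q ^ a ≤ (2 ^ k) ^ a * ((1 + r) ^ a * (1 + s) ^ a) := by
    rw [← Real.mul_rpow (by positivity) (by positivity),
      ← Real.mul_rpow (by positivity) (by positivity)]
    exact Real.rpow_le_rpow hq.le (one_add_two_pow_mul_norm_sub_le ν k x y z) ha
  have htwo : (2 : ℝ) ^ ((k : ℝ) * (N - a)) * (2 ^ k) ^ a = (2 ^ k) ^ N := by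
    rw [← Real.rpow_natCast 2 k, ← Real.rpow_mul zero_le_two, ← Real.rpow_add two_pos, ← mul_add,
      sub_add_cancel, Real.rpow_mul zero_le_two, Real.rpow_natCast]
  calc 2 ^ ((k : ℝ) * (N - a)) * q ^ a
      ≤ 2 ^ ((k : ℝ) * (N - a)) * ((2 ^ k) ^ a * ((1 + r) ^ a * (1 + s) ^ a)) := by gcongr
    _ = (2 ^ k) ^ N * ((1 + r) ^ a * (1 + s) ^ a) := by rw [← mul_assoc, htwo]
    _ ≤ (2 ^ k) ^ N * ((1 + r) ^ (N : ℝ) * (2 ^ a * (1 + s ^ a))) := by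
        gcongr
        · exact le_add_of_nonneg_right hr
        · exact one_add_rpow_le ha hs
    _ = 2 ^ a * ((2 ^ k * (1 + r)) ^ N * (1 + s ^ a)) := by
        rw [Real.rpow_natCast, mul_pow]
        ring

lemma const_pos_of_forall_le {w : ℕ → E → ℝ}
    (hwC : ∀ j x y, 0 < w j x ∧ w j x ≤ C * w j y * (1 + 2 ^ j * ‖x - y‖) ^ al) : 0 < C := by
  have hpos : 0 < w 0 0 := (hwC 0 0 0).1
  have hle : w 0 0 ≤ C * w 0 0 := by simpa using (hwC 0 0 0).2
  exact pos_of_mul_pos_left (hpos.trans_le hle) hpos.le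

lemma weight_le_weight_add {w : ℕ → E → ℝ}
    (hwC : ∀ j x y, 0 < w j x ∧ w j x ≤ C * w j y * (1 + 2 ^ j * ‖x - y‖) ^ al)
    (hw1 : ∀ j x, 2 ^ al1 * w j x ≤ w (j + 1) x) (ν k : ℕ) (x z : E) :
    w ν x ≤ C * (2 ^ (-(k : ℝ) * al1) * ((1 + 2 ^ (ν + k) * ‖x - z‖) ^ al * w (ν + k) z)) := by
  have hgeom : 2 ^ ((k : ℝ) * al1) * w ν x ≤ w (ν + k) x := by
    rw [mul_comm (k : ℝ), Real.rpow_mul zero_le_two, Real.rpow_natCast]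
    exact geom_le (u := fun i => w (ν + i) x) (by positivity) k fun i _ => hw1 (ν + i) x
  calc w ν x = 2 ^ (-(k : ℝ) * al1) * (2 ^ ((k : ℝ) * al1) * w ν x) := by
        rw [← mul_assoc, ← Real.rpow_add two_pos, neg_mul, neg_add_cancel, Real.rpow_zero, one_mul]
    _ ≤ 2 ^ (-(k : ℝ) * al1) * (C * w (ν + k) z * (1 + 2 ^ (ν + k) * ‖x - z‖) ^ al) :=
        mul_le_mul_of_nonneg_left (hgeom.trans (hwC (ν + k) x z).2) (by positivity)
    _ = _ := by ring

lemma inv_pow_mul_inv_one_add_rpow_mul_weight_le {w : ℕ → E → ℝ}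
    (hwC : ∀ j x y, 0 < w j x ∧ w j x ≤ C * w j y * (1 + 2 ^ j * ‖x - y‖) ^ al)
    (hw1 : ∀ j x, 2 ^ al1 * w j x ≤ w (j + 1) x) {N : ℕ} {a : ℝ} (ha : 0 ≤ a) (haN : a ≤ N)
    (ν k : ℕ) (x y z : E) :
    ((2 ^ k * (1 + 2 ^ ν * ‖y - z‖)) ^ N)⁻¹ * (1 + ((2 : ℝ) ^ ν * ‖y - x‖) ^ a)⁻¹ * w ν x ≤
      2 ^ a * C * (2 ^ (-(k : ℝ) * (N - a + al1)) *
        ((1 + 2 ^ (ν + k) * ‖x - z‖) ^ (-(a - al)) * w (ν + k) z)) := by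
  set q := 1 + (2 : ℝ) ^ (ν + k) * ‖x - z‖
  have hq : 0 < q := by positivity
  calc _ ≤ 2 ^ a * (2 ^ (-(k : ℝ) * (N - a)) * q ^ (-a)) *
        (C * (2 ^ (-(k : ℝ) * al1) * (q ^ al * w (ν + k) z))) :=
        mul_le_mul (inv_pow_mul_inv_one_add_rpow_le ha haN ν k x y z)
          (weight_le_weight_add hwC hw1 ν k x z) (hwC ν x x).1.le (by positivity)
    _ = 2 ^ a * C * ((2 ^ (-(k : ℝ) * (N - a)) * 2 ^ (-(k : ℝ) * al1)) *
        ((q ^ (-a) * q ^ al) * w (ν + k) z)) := by ring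
    _ = _ := by
        rw [← Real.rpow_add two_pos, ← Real.rpow_add hq, ← mul_add, neg_sub', sub_neg_eq_add]

lemma damped_mul_weight_le {w : ℕ → E → ℝ}
    (hwC : ∀ j x y, 0 < w j x ∧ w j x ≤ C * w j y * (1 + 2 ^ j * ‖x - y‖) ^ al)
    (hw1 : ∀ j x, 2 ^ al1 * w j x ≤ w (j + 1) x) {N : ℕ} {a : ℝ} (ha : 0 ≤ a) (haN : a ≤ N)
    (G : ℕ → E → ℝ≥0∞) (ν k : ℕ) (x y z : E) :
    damped N G ν y k z *
        ((ENNReal.ofReal (1 + (2 ^ ν * ‖y - x‖) ^ a))⁻¹ * ENNReal.ofReal (w ν x)) ≤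
      ENNReal.ofReal (2 ^ a * C) * ENNReal.ofReal (2 ^ (-(k : ℝ) * (N - a + al1))) *
        ENNReal.ofReal ((1 + 2 ^ (ν + k) * ‖x - z‖) ^ (-(a - al))) *
          (G (ν + k) z * ENNReal.ofReal (w (ν + k) z)) := by
  have hC : 0 ≤ 2 ^ a * C := mul_nonneg (by positivity) (const_pos_of_forall_le hwC).le
  have kernel_le := ENNReal.ofReal_le_ofReal
    (inv_pow_mul_inv_one_add_rpow_mul_weight_le hwC hw1 ha haN ν k x y z)
  rw [ENNReal.ofReal_mul (p := _ * _) (by positivity), ENNReal.ofReal_mul (by positivity),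
    ENNReal.ofReal_inv_of_pos (by positivity), ENNReal.ofReal_inv_of_pos (by positivity),
    ENNReal.ofReal_pow (by positivity), ENNReal.ofReal_mul (p := 2 ^ a * C) hC,
    ENNReal.ofReal_mul (p := 2 ^ (-(k : ℝ) * _)) (by positivity),
    ENNReal.ofReal_mul (p := _ ^ (-(a - al))) (by positivity)] at kernel_le
  calc _ = (dyadicWeight ν k (y - z) ^ N)⁻¹ * (ENNReal.ofReal (1 + (2 ^ ν * ‖y - x‖) ^ a))⁻¹ *
          ENNReal.ofReal (w ν x) * G (ν + k) z := by
        rw [damped]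
        ring
    _ ≤ _ := mul_le_mul_left kernel_le _
    _ = _ := by ring

lemma etaK_mul_rpow (j : ℕ) (s : ℝ) {t : ℝ} (ht : 0 ≤ t) (x : Rn n) :
    etaK j (s * t) x =
      2 ^ (j * n) * ENNReal.ofReal ((1 + (2 : ℝ) ^ j * ‖x‖) ^ (-s)) ^ t := by
  rw [etaK, ENNReal.ofReal_mul (by positivity), ENNReal.ofReal_pow zero_le_two,
    ENNReal.ofReal_ofNat, ENNReal.ofReal_rpow_of_nonneg (by positivity) ht,
    ← Real.rpow_mul (by positivity), neg_mul]

lemma peetreMax_mul_rpow_le_iff {t : ℝ} (ht : 0 < t) {a : ℝ} {ν : ℕ} {F : Rn n → ℂ} {x : Rn n}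
    {b S : ℝ≥0∞} :
    (peetreMax a ν F x * b) ^ t ≤ S ↔ ∀ y,
      (‖F y‖₊ : ℝ≥0∞) ^ t * ((ENNReal.ofReal (1 + (2 ^ ν * ‖y - x‖) ^ a))⁻¹ * b) ^ t ≤ S := by
  simp only [← ENNReal.le_rpow_inv_iff ht, peetreMax, ENNReal.iSup_mul, iSup_le_iff,
    div_eq_mul_inv, mul_assoc, ← ENNReal.mul_rpow_of_nonneg _ _ ht.le]

lemma dampedSum_mul_weight_rpow_le {w : ℕ → Rn n → ℝ}
    (hwC : ∀ j x y, 0 < w j x ∧ w j x ≤ C * w j y * (1 + 2 ^ j * ‖x - y‖) ^ al)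
    (hw1 : ∀ j x, 2 ^ al1 * w j x ≤ w (j + 1) x) {t : ℝ} (ht : 0 ≤ t) {N : ℕ} {a : ℝ}
    (ha : 0 ≤ a) (haN : a ≤ N) (G : ℕ → Rn n → ℝ≥0∞) (ν : ℕ) (x y : Rn n) :
    dampedSum t N G ν y *
        ((ENNReal.ofReal (1 + (2 ^ ν * ‖y - x‖) ^ a))⁻¹ * ENNReal.ofReal (w ν x)) ^ t ≤
      ENNReal.ofReal (2 ^ a * C) ^ t * ∑' j : ℕ,
        ENNReal.ofReal ((2 : ℝ) ^ (-(j : ℝ) * (N - a + al1) * t)) *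
          lconv (etaK (ν + j) ((a - al) * t))
            (fun z => (G (ν + j) z * ENNReal.ofReal (w (ν + j) z)) ^ t) x := by
  set P := (ENNReal.ofReal (1 + ((2 : ℝ) ^ ν * ‖y - x‖) ^ a))⁻¹ * ENNReal.ofReal (w ν x)
  have hP : P ^ t ≠ ∞ := by
    refine ENNReal.rpow_ne_top_of_nonneg ht (ENNReal.mul_ne_top ?_ ENNReal.ofReal_ne_top)
    exact ENNReal.inv_ne_top.2 (ENNReal.ofReal_pos.2 (by positivity)).ne'
  have hD : ENNReal.ofReal (2 ^ a * C) ^ t ≠ ∞ :=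
    ENNReal.rpow_ne_top_of_nonneg ht ENNReal.ofReal_ne_top
  rw [dampedSum, ← ENNReal.tsum_mul_right, ← ENNReal.tsum_mul_left]
  refine ENNReal.tsum_le_tsum fun k => ?_
  unfold lconv
  rw [← lintegral_mul_const' _ _ hP, ← lintegral_const_mul' _ _ ENNReal.ofReal_ne_top,
    ← lintegral_const_mul' _ _ hD]
  refine lintegral_mono fun z => ?_
  have hpow := ENNReal.rpow_le_rpow (damped_mul_weight_le hwC hw1 ha haN G ν k x y z) ht
  simp only [ENNReal.mul_rpow_of_nonneg _ _ ht] at hpow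
  dsimp only
  rw [finrank_euclideanSpace_fin, mul_assoc, etaK_mul_rpow _ _ ht,
    Real.rpow_mul zero_le_two _ t, ← ENNReal.ofReal_rpow_of_nonneg (by positivity) ht]
  simp only [ENNReal.mul_rpow_of_nonneg _ _ ht, P]
  refine (mul_le_mul_right hpow (2 ^ ((ν + k) * n))).trans_eq ?_
  ring

lemma peetreMax_mul_weight_rpow_le {w : ℕ → Rn n → ℝ}
    (hwC : ∀ j x y, 0 < w j x ∧ w j x ≤ C * w j y * (1 + 2 ^ j * ‖x - y‖) ^ al)
    (hw1 : ∀ j x, 2 ^ al1 * w j x ≤ w (j + 1) x) {t : ℝ} (ht : 0 < t) {N : ℕ} {a : ℝ}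
    (ha : 0 ≤ a) (haN : a ≤ N) {K : ℝ≥0∞} {F : ℕ → Rn n → ℂ}
    (hF : ∀ ν x, (‖F ν x‖₊ : ℝ≥0∞) ^ t ≤ K * dampedSum t N (fun m z => ‖F m z‖₊) ν x)
    (ν : ℕ) (x : Rn n) :
    (peetreMax a ν (F ν) x * ENNReal.ofReal (w ν x)) ^ t ≤
      K * ENNReal.ofReal (2 ^ a * C) ^ t * ∑' j : ℕ,
        ENNReal.ofReal ((2 : ℝ) ^ (-(j : ℝ) * (N - a + al1) * t)) *
          lconv (etaK (ν + j) ((a - al) * t))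
            (fun z => ((‖F (ν + j) z‖₊ : ℝ≥0∞) * ENNReal.ofReal (w (ν + j) z)) ^ t) x := by
  refine (peetreMax_mul_rpow_le_iff ht).2 fun y => (mul_le_mul_left (hF ν y) _).trans ?_
  rw [mul_assoc, mul_assoc]
  exact mul_le_mul_right (dampedSum_mul_weight_rpow_le hwC hw1 ht.le ha haN _ ν x y) K

end Weights

/-! ### Weighted jets of Schwartz functions -/

section WeightedJet

open scoped SchwartzMap BoundedContinuousFunction

variable {E F : Type*} [NormedAddCommGroup E] [NormedSpace ℝ E]
  [NormedAddCommGroup F] [NormedSpace ℂ F]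

lemma exists_clm_comp_eq_of_norm_le {𝕜 V B : Type*} [RCLike 𝕜] [AddCommGroup V] [Module 𝕜 V]
    [SeminormedAddCommGroup B] [NormedSpace 𝕜 B] (f : V →ₗ[𝕜] 𝕜) (J : V →ₗ[𝕜] B)
    (h : ∃ C, ∀ v, ‖f v‖ ≤ C * ‖J v‖) : ∃ L : B →L[𝕜] 𝕜, ∀ v, f v = L (J v) := by
  obtain ⟨L, hL, -⟩ := exists_extension_norm_eq _ (f.compLeftInverse J)
  refine ⟨L, fun v => ?_⟩
  rw [← LinearMap.compLeftInverse_apply_of_bdd f J h v (J v) rfl]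
  exact (hL ⟨J v, v, rfl⟩).symm

lemma norm_one_add_norm_pow_smul_iteratedFDeriv_le (N : ℕ) (φ : 𝓢(E, F)) (x : E) :
    ‖fun l : Fin (N + 1) => (1 + ‖x‖) ^ N • iteratedFDeriv ℝ l φ x‖ ≤
      2 ^ N * (Finset.Iic (N, N)).sup (schwartzSeminormFamily ℂ E F) φ := by
  refine (pi_norm_le_iff_of_nonneg (by positivity)).2 fun l => ?_
  rw [norm_smul, Real.norm_of_nonneg (by positivity)]
  exact SchwartzMap.one_add_le_sup_seminorm_apply (m := (N, N)) le_rfl l.is_le φ x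

lemma continuous_one_add_norm_pow_smul_iteratedFDeriv (N : ℕ) (φ : 𝓢(E, F)) :
    Continuous fun x => fun l : Fin (N + 1) => (1 + ‖x‖) ^ N • iteratedFDeriv ℝ l φ x :=
  continuous_pi fun l => ((continuous_const.add continuous_norm).pow N).smul
    ((φ.smooth l).continuous_iteratedFDeriv le_rfl)

variable (E F) in
/-- The Banach space of bounded continuous families of multilinear maps of orders `0, …, N`, in
which the weighted jets of order `N` of Schwartz functions live. -/
def BoundedJet (N : ℕ) : Type _ := E →ᵇ ((l : Fin (N + 1)) → E [×(l : ℕ)]→L[ℝ] F)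

namespace BoundedJet

variable {N : ℕ}

instance : NormedAddCommGroup (BoundedJet E F N) :=
  inferInstanceAs (NormedAddCommGroup (E →ᵇ ((l : Fin (N + 1)) → E [×(l : ℕ)]→L[ℝ] F)))

instance : NormedSpace ℂ (BoundedJet E F N) :=
  inferInstanceAs (NormedSpace ℂ (E →ᵇ ((l : Fin (N + 1)) → E [×(l : ℕ)]→L[ℝ] F)))

instance [CompleteSpace F] : CompleteSpace (BoundedJet E F N) :=
  inferInstanceAs (CompleteSpace (E →ᵇ ((l : Fin (N + 1)) → E [×(l : ℕ)]→L[ℝ] F)))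

/-- The evaluation of the `l`-th component of a jet at the point `x` and the directions `m`. -/
def evalCLM (x : E) (l : Fin (N + 1)) (m : Fin l → E) : BoundedJet E F N →L[ℝ] F :=
  (ContinuousMultilinearMap.apply ℝ (fun _ => E) F m).comp <|
    (ContinuousLinearMap.proj (φ := fun l : Fin (N + 1) => E [×(l : ℕ)]→L[ℝ] F) l).comp <|
      BoundedContinuousFunction.evalCLM ℝ (β := (l : Fin (N + 1)) → E [×(l : ℕ)]→L[ℝ] F) x

lemma evalCLM_smul (x : E) (l : Fin (N + 1)) (m : Fin l → E) (c : ℂ) (J : BoundedJet E F N) :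
    evalCLM x l m (c • J) = c • evalCLM x l m J := rfl

lemma ext_evalCLM {J J' : BoundedJet E F N} (h : ∀ x l m, evalCLM x l m J = evalCLM x l m J') :
    J = J' :=
  BoundedContinuousFunction.ext fun x => funext fun l => ContinuousMultilinearMap.ext (h x l)

end BoundedJet

/-- The jet of order `N` of a Schwartz function, multiplied by the weight `(1 + ‖x‖) ^ N`. The
norms `φ ↦ ‖weightedJet N φ‖` form an increasing sequence that generates the Schwartz topology. -/
def weightedJet (N : ℕ) : 𝓢(E, F) →L[ℂ] BoundedJet E F N :=
  SchwartzMap.mkCLMtoNormedSpace (σ := RingHom.id ℂ) (G := BoundedJet E F N)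
    (fun φ => BoundedContinuousFunction.ofNormedAddCommGroup
      (fun x l => (1 + ‖x‖) ^ N • iteratedFDeriv ℝ l φ x)
      (continuous_one_add_norm_pow_smul_iteratedFDeriv N φ) _
      (norm_one_add_norm_pow_smul_iteratedFDeriv_le N φ))
    (fun φ χ => BoundedContinuousFunction.ext fun x => funext fun l =>
      (congrArg _ (iteratedFDeriv_add_apply (φ.contDiffAt l) (χ.contDiffAt l))).trans
        (smul_add _ _ _))
    (fun c φ => BoundedContinuousFunction.ext fun x => funext fun l =>
      (congrArg _ (iteratedFDeriv_const_smul_apply (φ.contDiffAt l))).trans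
        (smul_comm ((1 + ‖x‖) ^ N) c (iteratedFDeriv ℝ l φ x)))
    ⟨Finset.Iic (N, N), 2 ^ N, by positivity, fun φ =>
      BoundedContinuousFunction.norm_ofNormedAddCommGroup_le _ (by positivity) _⟩

lemma BoundedJet.evalCLM_weightedJet (N : ℕ) (φ : 𝓢(E, F)) (x : E) (l : Fin (N + 1))
    (m : Fin l → E) :
    evalCLM x l m (weightedJet N φ) = (1 + ‖x‖) ^ N • iteratedFDeriv ℝ l φ x m := rfl

lemma norm_weightedJet_le {N : ℕ} {φ : 𝓢(E, F)} {C : ℝ} (hC : 0 ≤ C)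
    (h : ∀ l ≤ N, ∀ x, (1 + ‖x‖) ^ N * ‖iteratedFDeriv ℝ l φ x‖ ≤ C) :
    ‖weightedJet N φ‖ ≤ C := by
  refine (BoundedContinuousFunction.norm_le hC).2 fun x =>
    (pi_norm_le_iff_of_nonneg hC).2 fun l => ?_
  refine le_of_eq_of_le ?_ (h l l.is_le x)
  exact (norm_smul ((1 + ‖x‖) ^ N) (iteratedFDeriv ℝ l φ x)).trans
    (by rw [Real.norm_of_nonneg (by positivity)])

lemma one_add_norm_pow_mul_norm_iteratedFDeriv_le {N l : ℕ} (hl : l ≤ N) (φ : 𝓢(E, F)) (x : E) :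
    (1 + ‖x‖) ^ N * ‖iteratedFDeriv ℝ l φ x‖ ≤ ‖weightedJet N φ‖ := by
  calc (1 + ‖x‖) ^ N * ‖iteratedFDeriv ℝ l φ x‖
      = ‖(1 + ‖x‖) ^ N • iteratedFDeriv ℝ l φ x‖ := by
        rw [norm_smul, Real.norm_of_nonneg (by positivity)]
    _ ≤ ‖fun l : Fin (N + 1) => (1 + ‖x‖) ^ N • iteratedFDeriv ℝ l φ x‖ :=
        norm_le_pi_norm (fun l : Fin (N + 1) => (1 + ‖x‖) ^ N • iteratedFDeriv ℝ l φ x)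
          ⟨l, Nat.lt_succ_of_le hl⟩
    _ ≤ ‖weightedJet N φ‖ := BoundedContinuousFunction.norm_coe_le_norm
        (β := (l : Fin (N + 1)) → E [×(l : ℕ)]→L[ℝ] F) (weightedJet N φ) x

lemma one_add_norm_pow_mul_norm_le (N : ℕ) (φ : 𝓢(E, F)) (x : E) :
    (1 + ‖x‖) ^ N * ‖φ x‖ ≤ ‖weightedJet N φ‖ := by
  simpa only [norm_iteratedFDeriv_zero] using
    one_add_norm_pow_mul_norm_iteratedFDeriv_le N.zero_le φ x

lemma seminorm_le_norm_weightedJet {N k l : ℕ} (hk : k ≤ N) (hl : l ≤ N) (φ : 𝓢(E, F)) :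
    SchwartzMap.seminorm ℂ k l φ ≤ ‖weightedJet N φ‖ := by
  refine SchwartzMap.seminorm_le_bound _ _ _ _ (norm_nonneg _) fun x =>
    le_trans ?_ (one_add_norm_pow_mul_norm_iteratedFDeriv_le hl φ x)
  gcongr
  calc ‖x‖ ^ k ≤ (1 + ‖x‖) ^ k := by gcongr; exact le_add_of_nonneg_left zero_le_one
    _ ≤ (1 + ‖x‖) ^ N := pow_le_pow_right₀ (le_add_of_nonneg_right (norm_nonneg x)) hk

lemma tendsto_of_tendsto_norm_weightedJet_sub {ι : Type*} {p : Filter ι} {φ : ι → 𝓢(E, F)}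
    {φ₀ : 𝓢(E, F)} (h : ∀ N, Filter.Tendsto (fun i => ‖weightedJet N (φ i - φ₀)‖) p (nhds 0)) :
    Filter.Tendsto φ p (nhds φ₀) := by
  rw [(schwartz_withSeminorms ℂ E F).tendsto_nhds]
  rintro ⟨k, l⟩ ε hε
  filter_upwards [(h (max k l)).eventually_lt_const hε] with i hi
  exact (seminorm_le_norm_weightedJet (le_max_left k l) (le_max_right k l) _).trans_lt hi

lemma exists_finset_sup_seminorm_le_norm_weightedJet (s : Finset (ℕ × ℕ)) :
    ∃ N, ∀ φ : 𝓢(E, F), s.sup (schwartzSeminormFamily ℂ E F) φ ≤ ‖weightedJet N φ‖ :=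
  ⟨s.sup fun i => max i.1 i.2, fun φ => Seminorm.finset_sup_apply_le (norm_nonneg _)
    fun _ hi => have h := Finset.le_sup (f := fun i : ℕ × ℕ => max i.1 i.2) hi
      seminorm_le_norm_weightedJet ((le_max_left _ _).trans h) ((le_max_right _ _).trans h) φ⟩

lemma exists_norm_le_norm_weightedJet {G : Type*} [NormedAddCommGroup G] [NormedSpace ℂ G]
    (L : 𝓢(E, F) →L[ℂ] G) : ∃ (N : ℕ) (C : ℝ), 0 ≤ C ∧ ∀ φ, ‖L φ‖ ≤ C * ‖weightedJet N φ‖ := by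
  obtain ⟨s, C, -, hC⟩ := Seminorm.bound_of_continuous (schwartz_withSeminorms ℂ E F)
    ((normSeminorm ℂ G).comp L.toLinearMap) L.continuous.norm
  obtain ⟨N, hN⟩ := exists_finset_sup_seminorm_le_norm_weightedJet (E := E) (F := F) s
  exact ⟨N, C, C.2, fun φ => (hC φ).trans (mul_le_mul_of_nonneg_left (hN φ) C.2)⟩

lemma exists_forall_eq_comp_weightedJet (f : 𝓢(E, F) →L[ℂ] ℂ) :
    ∃ (N : ℕ) (L : BoundedJet E F N →L[ℂ] ℂ), ∀ φ, f φ = L (weightedJet N φ) := by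
  obtain ⟨N, C, -, hC⟩ := exists_norm_le_norm_weightedJet f
  obtain ⟨L, hL⟩ := exists_clm_comp_eq_of_norm_le f.toLinearMap
    (weightedJet (E := E) (F := F) N).toLinearMap ⟨C, hC⟩
  exact ⟨N, L, hL⟩

end WeightedJet

/-! ### Convolution of Schwartz functions with tempered distributions -/

section Translation

lemma iteratedFDeriv_reflectTranslate (y : Rn n) (l : ℕ) (Ψ : SchwartzMap (Rn n) ℂ) (x : Rn n) :
    iteratedFDeriv ℝ l (reflectTranslate y Ψ) x =
      (-1 : ℝ) ^ l • iteratedFDeriv ℝ l Ψ (y - x) := by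
  have h : (reflectTranslate y Ψ : Rn n → ℂ) = fun x => (fun u => Ψ (y + u)) ((-1 : ℝ) • x) := by
    ext x
    rw [reflectTranslate_apply, neg_one_smul, sub_eq_add_neg]
  have hΨ : ContDiff ℝ l fun u => Ψ (y + u) := (Ψ.smooth l).comp (contDiff_const.add contDiff_id)
  rw [h, iteratedFDeriv_comp_const_smul _ hΨ]
  beta_reduce
  rw [iteratedFDeriv_comp_add_left, neg_one_smul, sub_eq_add_neg]

lemma norm_iteratedFDeriv_reflectTranslate (y : Rn n) (l : ℕ) (Ψ : SchwartzMap (Rn n) ℂ)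
    (x : Rn n) :
    ‖iteratedFDeriv ℝ l (reflectTranslate y Ψ) x‖ = ‖iteratedFDeriv ℝ l Ψ (y - x)‖ := by
  rw [iteratedFDeriv_reflectTranslate, norm_smul, norm_pow, norm_neg, norm_one, one_pow, one_mul]

lemma norm_weightedJet_reflectTranslate_le (N : ℕ) (y : Rn n) (Ψ : SchwartzMap (Rn n) ℂ) :
    ‖weightedJet N (reflectTranslate y Ψ)‖ ≤ (1 + ‖y‖) ^ N * ‖weightedJet N Ψ‖ := by
  refine norm_weightedJet_le (by positivity) fun l hl x => ?_
  have hx : 1 + ‖x‖ ≤ (1 + ‖y‖) * (1 + ‖y - x‖) := by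
    simpa only [one_mul, zero_sub, norm_neg, sub_zero] using
      (one_add_mul_norm_sub_le zero_le_one 0 y x)
  rw [norm_iteratedFDeriv_reflectTranslate]
  calc (1 + ‖x‖) ^ N * ‖iteratedFDeriv ℝ l Ψ (y - x)‖
      ≤ ((1 + ‖y‖) * (1 + ‖y - x‖)) ^ N * ‖iteratedFDeriv ℝ l Ψ (y - x)‖ := by gcongr
    _ = (1 + ‖y‖) ^ N * ((1 + ‖y - x‖) ^ N * ‖iteratedFDeriv ℝ l Ψ (y - x)‖) := by
      rw [mul_pow, mul_assoc]
    _ ≤ (1 + ‖y‖) ^ N * ‖weightedJet N Ψ‖ := by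
      gcongr
      exact one_add_norm_pow_mul_norm_iteratedFDeriv_le hl Ψ (y - x)

lemma hasFDerivAt_iteratedFDeriv_sub_const (l : ℕ) (Ψ : SchwartzMap (Rn n) ℂ) (u x : Rn n) :
    HasFDerivAt (fun u => iteratedFDeriv ℝ l Ψ (u - x))
      (fderiv ℝ (iteratedFDeriv ℝ l Ψ) (u - x)) u :=
  ((Ψ.smooth ⊤).differentiable_iteratedFDeriv (m := l)
    (by exact_mod_cast WithTop.coe_lt_top l) (u - x)).hasFDerivAt.comp u (hasFDerivAt_sub_const x)

lemma norm_weightedJet_reflectTranslate_sub_le (N : ℕ) {y y₀ : Rn n} (hy : ‖y - y₀‖ ≤ 1)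
    (Ψ : SchwartzMap (Rn n) ℂ) :
    ‖weightedJet N (reflectTranslate y Ψ - reflectTranslate y₀ Ψ)‖ ≤
      (2 + ‖y₀‖) ^ (N + 1) * ‖weightedJet (N + 1) Ψ‖ * ‖y - y₀‖ := by
  refine norm_weightedJet_le (by positivity) fun l hl x => ?_
  have hsub : iteratedFDeriv ℝ l
      (reflectTranslate y Ψ - reflectTranslate y₀ Ψ : SchwartzMap (Rn n) ℂ) x
      = (-1 : ℝ) ^ l • (iteratedFDeriv ℝ l Ψ (y - x) - iteratedFDeriv ℝ l Ψ (y₀ - x)) := by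
    rw [smul_sub, ← iteratedFDeriv_reflectTranslate, ← iteratedFDeriv_reflectTranslate]
    exact iteratedFDeriv_sub_apply ((reflectTranslate y Ψ).contDiffAt l)
      ((reflectTranslate y₀ Ψ).contDiffAt l)
  have hx : 0 < (1 + ‖x‖) ^ N := by positivity
  have hderiv : ∀ u ∈ Metric.closedBall y₀ 1, ‖fderiv ℝ (iteratedFDeriv ℝ l Ψ) (u - x)‖ ≤
      (2 + ‖y₀‖) ^ (N + 1) * ‖weightedJet (N + 1) Ψ‖ / (1 + ‖x‖) ^ N := by
    intro u hu
    have hu' : 1 + ‖u‖ ≤ 2 + ‖y₀‖ := by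
      linarith [norm_le_norm_add_norm_sub' u y₀, mem_closedBall_iff_norm.1 hu]
    rw [le_div_iff₀' hx, norm_fderiv_iteratedFDeriv, ← norm_iteratedFDeriv_reflectTranslate]
    calc (1 + ‖x‖) ^ N * ‖iteratedFDeriv ℝ (l + 1) (reflectTranslate u Ψ) x‖
        ≤ (1 + ‖x‖) ^ (N + 1) * ‖iteratedFDeriv ℝ (l + 1) (reflectTranslate u Ψ) x‖ := by
          gcongr
          · exact le_add_of_nonneg_right (norm_nonneg x)
          · exact N.le_succ
      _ ≤ ‖weightedJet (N + 1) (reflectTranslate u Ψ)‖ :=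
          one_add_norm_pow_mul_norm_iteratedFDeriv_le (Nat.succ_le_succ hl) _ x
      _ ≤ (1 + ‖u‖) ^ (N + 1) * ‖weightedJet (N + 1) Ψ‖ :=
          norm_weightedJet_reflectTranslate_le (N + 1) u Ψ
      _ ≤ (2 + ‖y₀‖) ^ (N + 1) * ‖weightedJet (N + 1) Ψ‖ := by gcongr
  have hmv := (convex_closedBall y₀ 1).norm_image_sub_le_of_norm_hasFDerivWithin_le
    (fun u _ => (hasFDerivAt_iteratedFDeriv_sub_const l Ψ u x).hasFDerivWithinAt) hderiv
    (Metric.mem_closedBall_self zero_le_one) (mem_closedBall_iff_norm.2 hy)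
  rw [hsub, norm_smul, norm_pow, norm_neg, norm_one, one_pow, one_mul]
  rwa [div_mul_eq_mul_div, le_div_iff₀' hx] at hmv

lemma continuous_reflectTranslate (Ψ : SchwartzMap (Rn n) ℂ) :
    Continuous fun y => reflectTranslate y Ψ := by
  refine continuous_iff_continuousAt.2 fun y₀ =>
    tendsto_of_tendsto_norm_weightedJet_sub fun N => ?_
  have hlim : Filter.Tendsto
      (fun y : Rn n => (2 + ‖y₀‖) ^ (N + 1) * ‖weightedJet (N + 1) Ψ‖ * ‖y - y₀‖)
      (nhds y₀) (nhds 0) := by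
    simpa only [sub_self, norm_zero, mul_zero] using
      ((continuous_sub_right y₀).norm.const_mul _).tendsto y₀
  refine squeeze_zero' (.of_forall fun y => norm_nonneg _) ?_ hlim
  filter_upwards [Metric.closedBall_mem_nhds y₀ one_pos] with y hy
  exact norm_weightedJet_reflectTranslate_sub_le N (mem_closedBall_iff_norm.1 hy) Ψ

lemma continuous_distConv (Ψ : SchwartzMap (Rn n) ℂ) (f : TemperedDist n) :
    Continuous (distConv Ψ f) := f.continuous.comp (continuous_reflectTranslate Ψ)

end Translation

section Convolution

open LineDeriv
open scoped SchwartzMap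

variable {E F₁ F₂ F₃ : Type*} [NormedAddCommGroup E] [InnerProductSpace ℝ E]
  [FiniteDimensional ℝ E] [MeasurableSpace E] [BorelSpace E]

section Bilinear

variable [NormedAddCommGroup F₁] [NormedSpace ℂ F₁] [NormedAddCommGroup F₂] [NormedSpace ℂ F₂]
  [NormedAddCommGroup F₃] [NormedSpace ℂ F₃] [CompleteSpace F₃] (B : F₁ →L[ℂ] F₂ →L[ℂ] F₃)

lemma lineDerivOp_convolution (K : 𝓢(E, F₁)) (Ψ : 𝓢(E, F₂)) (v : E) :
    ∂_{v} (SchwartzMap.convolution B K Ψ) = SchwartzMap.convolution B K (∂_{v} Ψ) := by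
  have hg : (inner ℝ · v : E → ℝ).HasTemperateGrowth := by fun_prop
  refine (FourierTransform.fourierCLE ℂ 𝓢(E, F₃)).injective ?_
  simp only [FourierTransform.fourierCLE_apply]
  rw [SchwartzMap.fourier_convolution, SchwartzMap.fourier_lineDerivOp_eq,
    SchwartzMap.fourier_lineDerivOp_eq, SchwartzMap.fourier_convolution]
  ext x
  simp [SchwartzMap.smulLeftCLM_apply_apply hg]

lemma iteratedLineDerivOp_convolution (K : 𝓢(E, F₁)) (Ψ : 𝓢(E, F₂)) {l : ℕ} (m : Fin l → E) :
    ∂^{m} (SchwartzMap.convolution B K Ψ) = SchwartzMap.convolution B K (∂^{m} Ψ) := by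
  induction l with
  | zero => simp
  | succ l ih =>
    rw [iteratedLineDerivOp_succ_left, ih, lineDerivOp_convolution,
      ← iteratedLineDerivOp_succ_left]

end Bilinear

/-- The convolution of complex valued Schwartz functions. -/
abbrev schwartzConv (K Ψ : 𝓢(E, ℂ)) : 𝓢(E, ℂ) :=
  SchwartzMap.convolution (ContinuousLinearMap.mul ℂ ℂ) K Ψ

lemma schwartzConv_apply (K Ψ : 𝓢(E, ℂ)) (x : E) :
    schwartzConv K Ψ x = ∫ z, K z * Ψ (x - z) := by
  rw [SchwartzMap.convolution_apply]
  rfl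

lemma iteratedFDeriv_schwartzConv_apply (K Ψ : 𝓢(E, ℂ)) (l : ℕ) (x : E) (m : Fin l → E) :
    iteratedFDeriv ℝ l (schwartzConv K Ψ) x m =
      ∫ z, K z * iteratedFDeriv ℝ l Ψ (x - z) m := by
  simp only [← SchwartzMap.iteratedLineDerivOp_eq_iteratedFDeriv]
  rw [iteratedLineDerivOp_convolution, schwartzConv_apply]

lemma integrable_one_add_norm_pow_mul {E F : Type*} [NormedAddCommGroup E] [NormedSpace ℝ E]
    [NormedAddCommGroup F] [NormedSpace ℝ F] [MeasurableSpace E] [BorelSpace E]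
    [SecondCountableTopology E] (μ : Measure E) [μ.HasTemperateGrowth] (K : 𝓢(E, F)) (k : ℕ) :
    Integrable (fun z => (1 + ‖z‖) ^ k * ‖K z‖) μ := by
  have binomial : (fun z => (1 + ‖z‖) ^ k * ‖K z‖) = fun z => ∑ i ∈ Finset.range (k + 1),
      (k.choose i : ℝ) * (‖z‖ ^ i * ‖K z‖) := by
    ext z
    rw [add_comm, add_pow, Finset.sum_mul]
    exact Finset.sum_congr rfl fun i _ => by ring
  rw [binomial]
  exact integrable_finsetSum _ fun i _ => (K.integrable_pow_mul μ i).const_mul _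

lemma integrable_smul_weightedJet_reflectTranslate (K Ψ : 𝓢(Rn n, ℂ)) (y : Rn n) (N : ℕ) :
    Integrable fun z => K z • weightedJet N (reflectTranslate (y - z) Ψ) := by
  refine ((integrable_one_add_norm_pow_mul volume K N).mul_const
    ((1 + ‖y‖) ^ N * ‖weightedJet N Ψ‖)).mono' ?_ (.of_forall fun z => ?_)
  · exact (K.continuous.smul ((weightedJet N).continuous.comp ((continuous_reflectTranslate Ψ).comp
      (continuous_sub_left y)))).aestronglyMeasurable
  · have h1 : 1 + ‖y - z‖ ≤ (1 + ‖y‖) * (1 + ‖z‖) := by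
      simpa only [one_mul, zero_sub, norm_neg, sub_zero] using
        one_add_mul_norm_sub_le zero_le_one y 0 z
    rw [norm_smul]
    calc ‖K z‖ * ‖weightedJet N (reflectTranslate (y - z) Ψ)‖
        ≤ ‖K z‖ * ((1 + ‖y - z‖) ^ N * ‖weightedJet N Ψ‖) := by
          gcongr
          exact norm_weightedJet_reflectTranslate_le N (y - z) Ψ
      _ ≤ ‖K z‖ * (((1 + ‖y‖) * (1 + ‖z‖)) ^ N * ‖weightedJet N Ψ‖) := by gcongr
      _ = (1 + ‖z‖) ^ N * ‖K z‖ * ((1 + ‖y‖) ^ N * ‖weightedJet N Ψ‖) := by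
          rw [mul_pow]
          ring

lemma integral_smul_weightedJet_reflectTranslate (K Ψ : 𝓢(Rn n, ℂ)) (y : Rn n) (N : ℕ) :
    ∫ z, K z • weightedJet N (reflectTranslate (y - z) Ψ) =
      weightedJet N (reflectTranslate y (schwartzConv K Ψ)) := by
  refine BoundedJet.ext_evalCLM fun x l m => ?_
  rw [← (BoundedJet.evalCLM x l m).integral_comp_comm
    (integrable_smul_weightedJet_reflectTranslate K Ψ y N)]
  simp only [BoundedJet.evalCLM_smul, BoundedJet.evalCLM_weightedJet,
    iteratedFDeriv_reflectTranslate, iteratedFDeriv_schwartzConv_apply, _root_.smul_apply]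
  rw [← integral_smul, ← integral_smul]
  refine integral_congr_ae (.of_forall fun z => ?_)
  simp only [smul_eq_mul, Complex.real_smul, sub_right_comm y z]
  ring

lemma distConv_schwartzConv (K Ψ : 𝓢(Rn n, ℂ)) (f : TemperedDist n) (y : Rn n) :
    distConv (schwartzConv K Ψ) f y = ∫ z, K z * distConv Ψ f (y - z) := by
  obtain ⟨N, L, hL⟩ := exists_forall_eq_comp_weightedJet f
  simp only [distConv, hL]
  rw [← integral_smul_weightedJet_reflectTranslate,
    ← L.integral_comp_comm (integrable_smul_weightedJet_reflectTranslate K Ψ y N)]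
  simp only [map_smul, smul_eq_mul]

lemma enorm_distConv_schwartzConv_le (K Ψ : 𝓢(Rn n, ℂ)) (f : TemperedDist n) (y : Rn n) :
    ‖distConv (schwartzConv K Ψ) f y‖ₑ ≤ ∫⁻ z, ‖K (y - z)‖ₑ * ‖distConv Ψ f z‖ₑ := by
  rw [distConv_schwartzConv]
  refine (enorm_integral_le_lintegral_enorm _).trans_eq ?_
  rw [← lintegral_sub_left_eq_self _ y]
  simp only [enorm_mul, sub_sub_self]

end Convolution

/-! ### Dyadic dilations -/

section Dilation

open scoped SchwartzMap

variable {E F : Type*} [NormedAddCommGroup E] [NormedSpace ℝ E]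
  [NormedAddCommGroup F] [NormedSpace ℂ F]

/-- The dilation `φ ↦ φ(c ·)` of Schwartz functions by a nonzero real number `c`. -/
def dilateCLM (c : ℝˣ) : 𝓢(E, F) →L[ℂ] 𝓢(E, F) :=
  SchwartzMap.compCLMOfContinuousLinearEquiv ℂ (ContinuousLinearEquiv.smulLeft c)

/-- The dilation `φ ↦ φ(2^{-m} ·)` of Schwartz functions. -/
def dyadicDilate (m : ℕ) : 𝓢(E, F) →L[ℂ] 𝓢(E, F) :=
  dilateCLM (Units.mk0 ((2 : ℝ) ^ m)⁻¹ (by positivity))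

lemma dyadicDilate_apply (m : ℕ) (φ : 𝓢(E, F)) (x : E) :
    dyadicDilate m φ x = φ (((2 : ℝ) ^ m)⁻¹ • x) := rfl

lemma norm_iteratedFDeriv_comp_const_smul_le {G : Type*} [NormedAddCommGroup G] [NormedSpace ℝ G]
    {g : E → G} {l : ℕ} (hg : ContDiff ℝ l g) {d : ℝ} (hd : |d| ≤ 1) (x : E) :
    ‖iteratedFDeriv ℝ l (fun x => g (d • x)) x‖ ≤ ‖iteratedFDeriv ℝ l g (d • x)‖ := by
  rw [iteratedFDeriv_comp_const_smul d hg, norm_smul, norm_pow]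
  exact mul_le_of_le_one_left (norm_nonneg _) (pow_le_one₀ (norm_nonneg d) hd)

lemma abs_two_pow_inv_le_one (m : ℕ) : |((2 : ℝ) ^ m)⁻¹| ≤ 1 := by
  rw [abs_of_nonneg (by positivity)]
  exact inv_le_one_of_one_le₀ (one_le_pow₀ one_le_two)

lemma norm_weightedJet_dyadicDilate_le (N m : ℕ) (φ : 𝓢(E, F)) :
    ‖weightedJet N (dyadicDilate m φ)‖ ≤ (2 ^ m) ^ N * ‖weightedJet N φ‖ := by
  refine norm_weightedJet_le (by positivity) fun l hl x => ?_
  set d : ℝ := (2 ^ m)⁻¹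
  have hx : 1 + ‖x‖ ≤ 2 ^ m * (1 + ‖d • x‖) := by
    rw [norm_smul, norm_inv, norm_pow, Real.norm_ofNat, mul_add,
      mul_inv_cancel_left₀ (by positivity), mul_one]
    gcongr
    exact one_le_pow₀ one_le_two
  calc (1 + ‖x‖) ^ N * ‖iteratedFDeriv ℝ l (dyadicDilate m φ) x‖
      ≤ (2 ^ m * (1 + ‖d • x‖)) ^ N * ‖iteratedFDeriv ℝ l φ (d • x)‖ := by
        gcongr
        exact norm_iteratedFDeriv_comp_const_smul_le (φ.smooth l) (abs_two_pow_inv_le_one m) x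
    _ = (2 ^ m) ^ N * ((1 + ‖d • x‖) ^ N * ‖iteratedFDeriv ℝ l φ (d • x)‖) := by
        rw [mul_pow, mul_assoc]
    _ ≤ (2 ^ m) ^ N * ‖weightedJet N φ‖ := by
        gcongr
        exact one_add_norm_pow_mul_norm_iteratedFDeriv_le hl φ (d • x)

lemma hasTemperateGrowth_comp_two_pow_inv_smul {g : E → F} (hg : g.HasTemperateGrowth) (j : ℕ) :
    Function.HasTemperateGrowth fun x => g (((2 : ℝ) ^ j)⁻¹ • x) :=
  hg.comp ((((2 : ℝ) ^ j)⁻¹ • ContinuousLinearMap.id ℝ E).hasTemperateGrowth)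

lemma norm_iteratedFDeriv_le_norm_weightedJet {N l : ℕ} (hl : l ≤ N) (φ : 𝓢(E, F)) (x : E) :
    ‖iteratedFDeriv ℝ l φ x‖ ≤ ‖weightedJet N φ‖ :=
  (le_mul_of_one_le_left (norm_nonneg _)
    (one_le_pow₀ (le_add_of_nonneg_right (norm_nonneg x)))).trans
      (one_add_norm_pow_mul_norm_iteratedFDeriv_le hl φ x)

lemma norm_iteratedFDeriv_const_sub_le {N l : ℕ} (hl : l ≤ N) (b : F) (φ : 𝓢(E, F)) (x : E) :
    ‖iteratedFDeriv ℝ l (fun x => b - φ x) x‖ ≤ ‖b‖ + ‖weightedJet N φ‖ := by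
  have hb : ‖iteratedFDeriv ℝ l (fun _ : E => b) x‖ ≤ ‖b‖ := by
    cases l with
    | zero => rw [norm_iteratedFDeriv_zero]
    | succ l =>
      rw [iteratedFDeriv_succ_const, Pi.zero_apply, norm_zero]
      exact norm_nonneg b
  have hsub : iteratedFDeriv ℝ l (fun x => b - φ x) x =
      iteratedFDeriv ℝ l (fun _ : E => b) x - iteratedFDeriv ℝ l φ x :=
    iteratedFDeriv_sub_apply contDiffAt_const (φ.contDiffAt l)
  rw [hsub]
  exact (norm_sub_le _ _).trans
    (add_le_add hb (norm_iteratedFDeriv_le_norm_weightedJet hl φ x))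

lemma one_add_norm_pow_mul_norm_iteratedFDeriv_smul_le {N l : ℕ} (hl : l ≤ N) {g : E → ℂ}
    (hg : ContDiff ℝ l g) (u : 𝓢(E, F)) {B : ℝ} {x : E}
    (hB : ∀ i ≤ l, ‖iteratedFDeriv ℝ i g x‖ ≤ B) :
    (1 + ‖x‖) ^ N * ‖iteratedFDeriv ℝ l (fun x => g x • u x) x‖ ≤
      2 ^ l * B * ‖weightedJet N u‖ := by
  calc (1 + ‖x‖) ^ N * ‖iteratedFDeriv ℝ l (fun x => g x • u x) x‖
      ≤ (1 + ‖x‖) ^ N * ∑ i ∈ Finset.range (l + 1), (l.choose i : ℝ) *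
          ‖iteratedFDeriv ℝ i g x‖ * ‖iteratedFDeriv ℝ (l - i) u x‖ := by
        gcongr
        exact norm_iteratedFDeriv_smul_le hg (u.smooth l) x le_rfl
    _ = ∑ i ∈ Finset.range (l + 1), (l.choose i : ℝ) * (‖iteratedFDeriv ℝ i g x‖ *
          ((1 + ‖x‖) ^ N * ‖iteratedFDeriv ℝ (l - i) u x‖)) := by
        rw [Finset.mul_sum]
        exact Finset.sum_congr rfl fun i _ => by ring
    _ ≤ ∑ i ∈ Finset.range (l + 1), (l.choose i : ℝ) * (B * ‖weightedJet N u‖) := by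
        gcongr with i hi
        · exact (norm_nonneg _).trans (hB 0 l.zero_le)
        · exact hB i (Finset.mem_range_succ_iff.1 hi)
        · exact one_add_norm_pow_mul_norm_iteratedFDeriv_le ((l.sub_le i).trans hl) u x
    _ = 2 ^ l * B * ‖weightedJet N u‖ := by
        rw [← Finset.sum_mul, ← mul_assoc]
        congr 2
        exact_mod_cast Nat.sum_range_choose l

lemma exists_norm_weightedJet_smulLeftCLM_le {g : E → ℂ} (hg : g.HasTemperateGrowth)
    (hb : ∀ N, ∃ B, ∀ l ≤ N, ∀ x, ‖iteratedFDeriv ℝ l g x‖ ≤ B) {c : ℝ} (hc : 0 < c)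
    (h0 : ∀ x, ‖x‖ < c → g x = 0) (u : 𝓢(E, F)) (N L : ℕ) :
    ∃ C, 0 ≤ C ∧ ∀ j : ℕ,
      ‖weightedJet N (SchwartzMap.smulLeftCLM F (fun x => g (((2 : ℝ) ^ j)⁻¹ • x)) u)‖ ≤
        C * ((2 ^ j) ^ L)⁻¹ := by
  obtain ⟨B, hB⟩ := hb N
  have hB0 : 0 ≤ B := (norm_nonneg _).trans (hB 0 N.zero_le 0)
  refine ⟨2 ^ N * B * ‖weightedJet (N + L) u‖ * (c ^ L)⁻¹, by positivity, fun j =>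
    norm_weightedJet_le (by positivity) fun l hl x => ?_⟩
  have hgj := hasTemperateGrowth_comp_two_pow_inv_smul hg j
  rw [SchwartzMap.smulLeftCLM_apply hgj]
  rcases lt_or_ge ‖((2 : ℝ) ^ j)⁻¹ • x‖ c with hx | hx
  · have hzero : (fun y => g (((2 : ℝ) ^ j)⁻¹ • y) • u y) =ᶠ[nhds x] fun _ => 0 := by
      have hopen : IsOpen {y : E | ‖((2 : ℝ) ^ j)⁻¹ • y‖ < c} := by
        apply isOpen_lt <;> fun_prop
      filter_upwards [hopen.mem_nhds hx] with y hy
      rw [h0 _ hy, zero_smul]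
    rw [(hzero.iteratedFDeriv ℝ l).eq_of_nhds, iteratedFDeriv_fun_zero, Pi.zero_apply,
      norm_zero, mul_zero]
    positivity
  have hfar : (2 ^ j * c) ^ L ≤ (1 + ‖x‖) ^ L := by
    rw [norm_smul, norm_inv, norm_pow, Real.norm_ofNat,
      le_inv_mul_iff₀ (by positivity)] at hx
    gcongr
    exact hx.trans (le_add_of_nonneg_left zero_le_one)
  have hleib := one_add_norm_pow_mul_norm_iteratedFDeriv_smul_le (hl.trans (N.le_add_right L))
    (hgj.1.of_le (by exact_mod_cast le_top)) u (x := x) (B := B) fun i hi =>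
      (norm_iteratedFDeriv_comp_const_smul_le (hg.1.of_le (by exact_mod_cast le_top))
        (abs_two_pow_inv_le_one j) x).trans (hB i (hi.trans hl) _)
  rw [mul_assoc _ (c ^ L)⁻¹, ← mul_inv, ← mul_pow, mul_comm c, ← div_eq_mul_inv,
    le_div_iff₀ (by positivity)]
  calc _ ≤ (1 + ‖x‖) ^ N * ‖iteratedFDeriv ℝ l (fun y => g (((2 : ℝ) ^ j)⁻¹ • y) • u y) x‖ *
        (1 + ‖x‖) ^ L := by gcongr
    _ = (1 + ‖x‖) ^ (N + L) *
        ‖iteratedFDeriv ℝ l (fun y => g (((2 : ℝ) ^ j)⁻¹ • y) • u y) x‖ := by ring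
    _ ≤ 2 ^ l * B * ‖weightedJet (N + L) u‖ := hleib
    _ ≤ 2 ^ N * B * ‖weightedJet (N + L) u‖ := by
        gcongr
        exact one_le_two

lemma tendsto_smulLeftCLM_zero {g : E → ℂ} (hg : g.HasTemperateGrowth)
    (hb : ∀ N, ∃ B, ∀ l ≤ N, ∀ x, ‖iteratedFDeriv ℝ l g x‖ ≤ B) {c : ℝ} (hc : 0 < c)
    (h0 : ∀ x, ‖x‖ < c → g x = 0) (u : 𝓢(E, F)) :
    Filter.Tendsto
      (fun j : ℕ => SchwartzMap.smulLeftCLM F (fun x => g (((2 : ℝ) ^ j)⁻¹ • x)) u)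
      Filter.atTop (nhds 0) := by
  refine tendsto_of_tendsto_norm_weightedJet_sub fun N => ?_
  obtain ⟨C, -, hC⟩ := exists_norm_weightedJet_smulLeftCLM_le hg hb hc h0 u N 1
  have hlim : Filter.Tendsto (fun j : ℕ => C * (((2 : ℝ) ^ j) ^ 1)⁻¹) Filter.atTop (nhds 0) := by
    simpa only [inv_pow, pow_one, mul_zero] using
      (tendsto_pow_atTop_nhds_zero_of_lt_one (r := (2 : ℝ)⁻¹) (by norm_num)
        (by norm_num)).const_mul C
  refine squeeze_zero (fun _ => norm_nonneg _) (fun j => ?_) hlim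
  rw [sub_zero]
  exact hC j

end Dilation

/-! ### Fourier transforms of dilates and products -/

section Fourier

open scoped SchwartzMap

variable {E F : Type*} [NormedAddCommGroup E] [InnerProductSpace ℝ E] [FiniteDimensional ℝ E]
  [MeasurableSpace E] [BorelSpace E] [NormedAddCommGroup F] [NormedSpace ℂ F]

lemma exists_norm_weightedJet_fourier_le (A : ℕ) :
    ∃ (N : ℕ) (C : ℝ), 0 ≤ C ∧ ∀ φ : 𝓢(E, F), ‖weightedJet A (𝓕 φ)‖ ≤ C * ‖weightedJet N φ‖ :=
  exists_norm_le_norm_weightedJet (weightedJet A ∘L FourierTransform.fourierCLM ℂ 𝓢(E, F))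

lemma fourier_dyadicDilate_apply (m : ℕ) (φ : 𝓢(E, F)) (x : E) :
    𝓕 (dyadicDilate m φ) x =
      (2 : ℝ) ^ (m * Module.finrank ℝ E) • 𝓕 φ ((2 : ℝ) ^ m • x) := by
  have hinner (u : E) : inner ℝ (((2 : ℝ) ^ m)⁻¹ • u) ((2 : ℝ) ^ m • x) = inner ℝ u x := by
    rw [real_inner_smul_left, real_inner_smul_right, inv_mul_cancel_left₀ (by positivity)]
  have hcov := Measure.integral_comp_smul (volume : Measure E)
    (fun u => Real.fourierChar (-inner ℝ u ((2 : ℝ) ^ m • x)) • φ u) ((2 : ℝ) ^ m)⁻¹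
  simp only [hinner] at hcov
  simp only [SchwartzMap.fourier_coe, Real.fourier_eq, dyadicDilate_apply]
  rw [hcov, inv_pow, inv_inv, abs_of_pos (by positivity), ← pow_mul]

lemma fourier_fourier_apply [CompleteSpace F] (φ : 𝓢(E, F)) (x : E) : 𝓕 (𝓕 φ) x = φ (-x) := by
  have hinv : 𝓕⁻ (𝓕 φ) (-x) = φ (-x) := by rw [FourierTransform.fourierInv_fourier_eq]
  rw [← hinv, SchwartzMap.fourierInv_apply_eq]
  simp

lemma fourier_eq_schwartzConv_of_eq_mul {P κ ψ : 𝓢(E, ℂ)} (h : ∀ x, P x = κ x * ψ x) :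
    𝓕 P = schwartzConv (𝓕 κ) (𝓕 ψ) := by
  refine (FourierTransform.fourierCLE ℂ 𝓢(E, ℂ)).injective ?_
  simp only [FourierTransform.fourierCLE_apply]
  rw [SchwartzMap.fourier_convolution]
  ext x
  simp [fourier_fourier_apply, h]

lemma enorm_fourier_dyadicDilate_le {H : 𝓢(E, F)} {A j : ℕ} {D : ℝ}
    (h : ‖weightedJet A (𝓕 H)‖ ≤ D * ((2 ^ j) ^ A)⁻¹) (ν : ℕ) (x : E) :
    ‖𝓕 (dyadicDilate ν H) x‖ₑ ≤
      ENNReal.ofReal D * (2 ^ (ν * Module.finrank ℝ E) * (dyadicWeight ν j x ^ A)⁻¹) := by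
  set d := Module.finrank ℝ E
  rw [← mul_assoc, ← div_eq_mul_inv, ENNReal.le_div_iff_mul_le
    (Or.inl (pow_ne_zero _ (dyadicWeight_ne_zero ν j x)))
    (Or.inl (ENNReal.pow_ne_top (dyadicWeight_ne_top ν j x)))]
  have htwo : (2 : ℝ≥0∞) ^ (ν * d) = ENNReal.ofReal (2 ^ (ν * d)) := by
    rw [ENNReal.ofReal_pow zero_le_two, ENNReal.ofReal_ofNat]
  rw [dyadicWeight, ← ENNReal.ofReal_pow (by positivity), ← ofReal_norm, htwo,
    ← ENNReal.ofReal_mul (norm_nonneg _), ← ENNReal.ofReal_mul' (by positivity)]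
  refine ENNReal.ofReal_le_ofReal ?_
  have hx := (one_add_norm_pow_mul_norm_le A (𝓕 H) ((2 : ℝ) ^ ν • x)).trans h
  rw [norm_smul, norm_pow, Real.norm_ofNat, ← div_eq_mul_inv, le_div_iff₀ (by positivity)] at hx
  rw [fourier_dyadicDilate_apply, norm_smul, norm_pow, Real.norm_ofNat, mul_pow]
  calc _ = (1 + 2 ^ ν * ‖x‖) ^ A * ‖𝓕 H ((2 : ℝ) ^ ν • x)‖ * (2 ^ j) ^ A * 2 ^ (ν * d) := by ring
    _ ≤ D * 2 ^ (ν * d) := by gcongr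

/-- The functional `φ ↦ (𝓕 φ ∗ f)(y)`, for a tempered distribution `f`. -/
def fourierDistConvCLM (f : TemperedDist n) (y : Rn n) : 𝓢(Rn n, ℂ) →L[ℂ] ℂ :=
  f ∘L SchwartzMap.compCLMOfAntilipschitz (𝕜 := ℂ) (K := 1)
    (hasTemperateGrowth_reflectTranslate y)
    ((Isometry.of_dist_eq (dist_sub_left y)).antilipschitz) ∘L
      FourierTransform.fourierCLM ℂ 𝓢(Rn n, ℂ)

lemma exists_norm_distConv_fourier_dyadicDilate_le (f : TemperedDist n) :
    ∃ (A N : ℕ) (C : ℝ), 0 ≤ C ∧ ∀ m (φ : 𝓢(Rn n, ℂ)) z,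
      ‖distConv (𝓕 (dyadicDilate m φ)) f z‖ ≤
        C * ‖weightedJet N φ‖ * (2 ^ m * (1 + ‖z‖)) ^ A := by
  obtain ⟨N₁, C₁, hC₁, hf⟩ := exists_norm_le_norm_weightedJet f
  obtain ⟨N₂, C₂, hC₂, hfourier⟩ := exists_norm_weightedJet_fourier_le (E := Rn n) (F := ℂ) N₁
  refine ⟨N₁ + N₂, N₂, C₁ * C₂, by positivity, fun m φ z => ?_⟩
  have hz : 1 ≤ 1 + ‖z‖ := le_add_of_nonneg_right (norm_nonneg z)
  have hm : (1 : ℝ) ≤ 2 ^ m := one_le_pow₀ one_le_two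
  calc _ ≤ C₁ * ((1 + ‖z‖) ^ N₁ * (C₂ * ((2 ^ m) ^ N₂ * ‖weightedJet N₂ φ‖))) := by
        refine (hf _).trans ?_
        gcongr
        refine (norm_weightedJet_reflectTranslate_le N₁ z _).trans ?_
        gcongr
        refine (hfourier _).trans ?_
        gcongr
        exact norm_weightedJet_dyadicDilate_le N₂ m φ
    _ = C₁ * C₂ * ‖weightedJet N₂ φ‖ * ((1 * (1 + ‖z‖)) ^ N₁ * (2 ^ m * 1) ^ N₂) := by ring
    _ ≤ C₁ * C₂ * ‖weightedJet N₂ φ‖ *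
          ((2 ^ m * (1 + ‖z‖)) ^ N₁ * (2 ^ m * (1 + ‖z‖)) ^ N₂) := by gcongr
    _ = C₁ * C₂ * ‖weightedJet N₂ φ‖ * (2 ^ m * (1 + ‖z‖)) ^ (N₁ + N₂) := by rw [← pow_add]

end Fourier

/-! ### The local reproducing formula -/

section Reproducing

open scoped SchwartzMap

section Multiplier

variable {E : Type*} [NormedAddCommGroup E] [NormedSpace ℝ E]

/-- The multipliers of the local reproducing formula for the Schwartz function `u`: the low
frequency cut-off `χ` for `j = 0`, and the product of `u` with the dilated cut-off `θ(2^{-j} ·)`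
for `j > 0`. -/
def reproducingMultiplier (χ θ u : 𝓢(E, ℂ)) : ℕ → 𝓢(E, ℂ)
  | 0 => χ
  | j + 1 => SchwartzMap.smulLeftCLM ℂ (fun x => θ (((2 : ℝ) ^ (j + 1))⁻¹ • x)) u

/-- The high frequency remainder `(1 - χ(2^{-J} ·)) u` of the local reproducing formula. -/
def reproducingRemainder (χ u : 𝓢(E, ℂ)) (J : ℕ) : 𝓢(E, ℂ) :=
  SchwartzMap.smulLeftCLM ℂ (fun x => 1 - χ (((2 : ℝ) ^ J)⁻¹ • x)) u

variable {χ θ : 𝓢(E, ℂ)}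

lemma hasTemperateGrowth_one_sub (χ : 𝓢(E, ℂ)) : Function.HasTemperateGrowth fun x => 1 - χ x :=
  (Function.HasTemperateGrowth.const 1).sub χ.hasTemperateGrowth

lemma reproducingRemainder_apply (χ u : 𝓢(E, ℂ)) (J : ℕ) (x : E) :
    reproducingRemainder χ u J x = (1 - χ (((2 : ℝ) ^ J)⁻¹ • x)) * u x :=
  SchwartzMap.smulLeftCLM_apply_apply
    (hasTemperateGrowth_comp_two_pow_inv_smul (hasTemperateGrowth_one_sub χ) J) u x

lemma tendsto_reproducingRemainder {c : ℝ} (hc : 0 < c) (hχ : ∀ x, ‖x‖ < c → χ x = 1)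
    (u : 𝓢(E, ℂ)) :
    Filter.Tendsto (reproducingRemainder χ u) Filter.atTop (nhds 0) :=
  tendsto_smulLeftCLM_zero (hasTemperateGrowth_one_sub χ)
    (fun _ => ⟨_, fun _ hl x => norm_iteratedFDeriv_const_sub_le hl 1 χ x⟩) hc
    (fun x hx => by rw [hχ x hx, sub_self]) u

variable {V : ℕ → 𝓢(E, ℂ)} (hV : ∀ m, V (m + 1) = V 1)
include hV

lemma sum_reproducingMultiplier_mul (hθχ : ∀ x, θ x * V 1 x = χ x - χ ((2 : ℝ) • x)) (ν J : ℕ)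
    (x : E) :
    ∑ j ∈ Finset.range (J + 1),
      reproducingMultiplier χ θ (V ν) j x * V (ν + j) (((2 : ℝ) ^ j)⁻¹ • x) =
      χ (((2 : ℝ) ^ J)⁻¹ • x) * V ν x := by
  induction J with
  | zero => simp [reproducingMultiplier]
  | succ J ih =>
    have hscale : (2 : ℝ) • ((2 : ℝ) ^ (J + 1))⁻¹ • x = ((2 : ℝ) ^ J)⁻¹ • x := by
      rw [smul_smul, pow_succ, mul_inv, mul_comm, inv_mul_cancel_right₀ two_ne_zero]
    have htele := hθχ (((2 : ℝ) ^ (J + 1))⁻¹ • x)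
    rw [hscale] at htele
    rw [Finset.sum_range_succ, ih, ← add_assoc ν J 1, hV, reproducingMultiplier,
      SchwartzMap.smulLeftCLM_apply_apply
        (hasTemperateGrowth_comp_two_pow_inv_smul θ.hasTemperateGrowth (J + 1)), smul_eq_mul]
    linear_combination V ν x * htele

lemma dyadicDilate_eq_sum_add_remainder (hθχ : ∀ x, θ x * V 1 x = χ x - χ ((2 : ℝ) • x))
    (ν J : ℕ) :
    dyadicDilate ν (V ν) = (∑ j ∈ Finset.range (J + 1), SchwartzMap.smulLeftCLM ℂ
        (dyadicDilate ν (reproducingMultiplier χ θ (V ν) j)) (dyadicDilate (ν + j) (V (ν + j)))) +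
      dyadicDilate ν (reproducingRemainder χ (V ν) J) := by
  ext x
  have hterm (j : ℕ) : SchwartzMap.smulLeftCLM ℂ
      (dyadicDilate ν (reproducingMultiplier χ θ (V ν) j)) (dyadicDilate (ν + j) (V (ν + j))) x =
        reproducingMultiplier χ θ (V ν) j (((2 : ℝ) ^ ν)⁻¹ • x) *
          V (ν + j) (((2 : ℝ) ^ j)⁻¹ • ((2 : ℝ) ^ ν)⁻¹ • x) := by
    rw [SchwartzMap.smulLeftCLM_apply_apply (SchwartzMap.hasTemperateGrowth _), smul_eq_mul,
      dyadicDilate_apply, dyadicDilate_apply, pow_add, mul_inv, mul_comm (_ ^ ν)⁻¹, mul_smul]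
  rw [_root_.add_apply, sum_apply, Finset.sum_congr rfl fun j _ => hterm j,
    sum_reproducingMultiplier_mul hV hθχ, dyadicDilate_apply, dyadicDilate_apply,
    reproducingRemainder_apply]
  ring

lemma exists_norm_weightedJet_reproducingMultiplier_le {c : ℝ} (hc : 0 < c)
    (hθ : ∀ x, ‖x‖ < c → θ x = 0) (N A : ℕ) :
    ∃ D : ℝ, 0 ≤ D ∧ ∀ ν j : ℕ,
      ‖weightedJet N (reproducingMultiplier χ θ (V ν) j)‖ ≤ D * ((2 ^ j) ^ A)⁻¹ := by
  choose B hB0 hB using fun u : 𝓢(E, ℂ) =>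
    exists_norm_weightedJet_smulLeftCLM_le θ.hasTemperateGrowth
      (fun _ => ⟨_, fun _ hl x => norm_iteratedFDeriv_le_norm_weightedJet hl θ x⟩) hc hθ u N A
  have hB01 (ν : ℕ) : B (V ν) ≤ B (V 0) + B (V 1) := by
    cases ν with
    | zero => exact le_add_of_nonneg_right (hB0 _)
    | succ ν => rw [hV]; exact le_add_of_nonneg_left (hB0 _)
  have hsum0 : 0 ≤ B (V 0) + B (V 1) := add_nonneg (hB0 _) (hB0 _)
  refine ⟨‖weightedJet N χ‖ + (B (V 0) + B (V 1)), by positivity, fun ν j => ?_⟩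
  cases j with
  | zero =>
    rw [reproducingMultiplier, pow_zero, one_pow, inv_one, mul_one]
    exact le_add_of_nonneg_right hsum0
  | succ j =>
    refine (hB (V ν) (j + 1)).trans ?_
    gcongr
    exact (hB01 ν).trans (le_add_of_nonneg_left (norm_nonneg _))

end Multiplier

lemma exists_norm_weightedJet_fourier_reproducingMultiplier_le {E : Type*} [NormedAddCommGroup E]
    [InnerProductSpace ℝ E] [FiniteDimensional ℝ E] [MeasurableSpace E] [BorelSpace E]
    {V : ℕ → 𝓢(E, ℂ)} (hV : ∀ m, V (m + 1) = V 1) (χ : 𝓢(E, ℂ)) {θ : 𝓢(E, ℂ)} {c : ℝ}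
    (hc : 0 < c) (hθ : ∀ x, ‖x‖ < c → θ x = 0) (A : ℕ) :
    ∃ D : ℝ, ∀ ν j : ℕ,
      ‖weightedJet A (𝓕 (reproducingMultiplier χ θ (V ν) j))‖ ≤ D * ((2 ^ j) ^ A)⁻¹ := by
  obtain ⟨N, C, hC, hfourier⟩ := exists_norm_weightedJet_fourier_le (E := E) (F := ℂ) A
  obtain ⟨D, -, hD⟩ := exists_norm_weightedJet_reproducingMultiplier_le (χ := χ) hV hc hθ N A
  refine ⟨C * D, fun ν j => (hfourier _).trans ?_⟩
  rw [mul_assoc]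
  gcongr
  exact hD ν j

lemma enorm_distConv_fourier_smulLeftCLM_dyadicDilate_le (f : TemperedDist n)
    {H ψ : 𝓢(Rn n, ℂ)} {A j : ℕ} {D : ℝ} (h : ‖weightedJet A (𝓕 H)‖ ≤ D * ((2 ^ j) ^ A)⁻¹)
    (ν : ℕ) (y : Rn n) :
    ‖distConv (𝓕 (SchwartzMap.smulLeftCLM ℂ (dyadicDilate ν H) ψ)) f y‖ₑ ≤
      ENNReal.ofReal D * ∫⁻ z, 2 ^ (ν * n) * ((dyadicWeight ν j (y - z) ^ A)⁻¹ *
        ‖distConv (𝓕 ψ) f z‖ₑ) := by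
  rw [fourier_eq_schwartzConv_of_eq_mul (SchwartzMap.smulLeftCLM_apply_apply
    (dyadicDilate ν H).hasTemperateGrowth ψ), ← lintegral_const_mul' _ _ ENNReal.ofReal_ne_top]
  refine (enorm_distConv_schwartzConv_le _ _ _ _).trans (lintegral_mono fun z => ?_)
  refine (mul_le_mul_left (enorm_fourier_dyadicDilate_le h ν (y - z)) _).trans_eq ?_
  rw [finrank_euclideanSpace_fin]
  ring

lemma exists_enorm_distConv_le_dampedSum {V : ℕ → 𝓢(Rn n, ℂ)} (hV : ∀ m, V (m + 1) = V 1)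
    {χ θ : 𝓢(Rn n, ℂ)} {c : ℝ} (hc : 0 < c) (hχ : ∀ x, ‖x‖ < c → χ x = 1)
    (hθ : ∀ x, ‖x‖ < c → θ x = 0) (hθχ : ∀ x, θ x * V 1 x = χ x - χ ((2 : ℝ) • x)) (A : ℕ) :
    ∃ C : ℝ≥0∞, C ≠ ∞ ∧ ∀ (f : TemperedDist n) ν y,
      ‖distConv (𝓕 (dyadicDilate ν (V ν))) f y‖ₑ ≤
        C * dampedSum 1 A (fun m z => ‖distConv (𝓕 (dyadicDilate m (V m))) f z‖ₑ) ν y := by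
  obtain ⟨D, hD⟩ := exists_norm_weightedJet_fourier_reproducingMultiplier_le hV χ hc hθ A
  refine ⟨ENNReal.ofReal D, ENNReal.ofReal_ne_top, fun f ν y => ?_⟩
  set S := dampedSum 1 A (fun m z => ‖distConv (𝓕 (dyadicDilate m (V m))) f z‖ₑ) ν y with hS
  let T := fourierDistConvCLM f y
  let P (j : ℕ) := SchwartzMap.smulLeftCLM ℂ
    (dyadicDilate ν (reproducingMultiplier χ θ (V ν) j)) (dyadicDilate (ν + j) (V (ν + j)))
  let R (J : ℕ) := dyadicDilate ν (reproducingRemainder χ (V ν) J)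
  have hsum (J : ℕ) : ∑ j ∈ Finset.range (J + 1), ‖T (P j)‖ₑ ≤ ENNReal.ofReal D * S := by
    rw [hS, dampedSum, ← ENNReal.tsum_mul_left]
    refine (Finset.sum_le_sum fun j _ => ?_).trans (ENNReal.sum_le_tsum (Finset.range (J + 1)))
    refine (enorm_distConv_fourier_smulLeftCLM_dyadicDilate_le f (hD ν j) ν y).trans ?_
    gcongr with z
    · exact one_le_two
    · exact ν.le_add_right j
    · exact finrank_euclideanSpace_fin.ge
    · rw [ENNReal.rpow_one, damped]
  have hR : Filter.Tendsto (fun J => ENNReal.ofReal D * S + ‖T (R J)‖ₑ) Filter.atTop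
      (nhds (ENNReal.ofReal D * S)) := by
    have hT : Continuous fun φ => T (dyadicDilate ν φ) :=
      T.continuous.comp (dyadicDilate ν).continuous
    simpa using ((hT.tendsto 0).comp
      (tendsto_reproducingRemainder hc hχ (V ν))).enorm.const_add (ENNReal.ofReal D * S)
  refine ge_of_tendsto' hR fun J => ?_
  calc ‖T (dyadicDilate ν (V ν))‖ₑ
      = ‖∑ j ∈ Finset.range (J + 1), T (P j) + T (R J)‖ₑ := by
        rw [dyadicDilate_eq_sum_add_remainder hV hθχ ν J, map_add, map_sum]
    _ ≤ ∑ j ∈ Finset.range (J + 1), ‖T (P j)‖ₑ + ‖T (R J)‖ₑ :=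
        (enorm_add_le _ _).trans (add_le_add_left (enorm_sum_le _ _) _)
    _ ≤ ENNReal.ofReal D * S + ‖T (R J)‖ₑ := add_le_add_left (hsum J) _

end Reproducing

/-! ### Cut-offs and the maximal inequality -/

section Cutoff

open scoped SchwartzMap

variable {E : Type*} [NormedAddCommGroup E]

lemma exists_schwartz_eq_one_eq_zero [NormedSpace ℝ E] [FiniteDimensional ℝ E] [HasContDiffBump E]
    {r R : ℝ} (hr : 0 < r) (hrR : r < R) :
    ∃ χ : 𝓢(E, ℂ), (∀ x, ‖x‖ ≤ r → χ x = 1) ∧ ∀ x, R ≤ ‖x‖ → χ x = 0 := by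
  let b : ContDiffBump (0 : E) := ⟨r, R, hr, hrR⟩
  have hsupp : HasCompactSupport fun x => (b x : ℂ) :=
    b.hasCompactSupport.comp_left (g := Complex.ofReal) Complex.ofReal_zero
  have hsmooth : ContDiff ℝ (⊤ : ℕ∞) fun x => (b x : ℂ) :=
    Complex.ofRealCLM.contDiff.comp b.contDiff
  refine ⟨hsupp.toSchwartzMap hsmooth, fun x hx => ?_, fun x hx => ?_⟩
  · have h : b x = 1 := b.one_of_mem_closedBall (mem_closedBall_zero_iff.2 hx)
    simp [h]
  · have h : b x = 0 := b.zero_of_le_dist (by rwa [dist_zero_right])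
    simp [h]

lemma contDiff_div_of_eventuallyEq_zero [NormedSpace ℝ E] {m : WithTop ℕ∞} {g u : E → ℂ}
    (hg : ContDiff ℝ m g) (hu : ContDiff ℝ m u)
    (h : ∀ x, u x ≠ 0 ∨ g =ᶠ[nhds x] 0) : ContDiff ℝ m fun x => g x / u x := by
  refine contDiff_iff_contDiffAt.2 fun x => ?_
  rcases h x with hx | hx
  · simp only [div_eq_mul_inv]
    exact hg.contDiffAt.mul (hu.contDiffAt.fun_inv hx)
  · refine (contDiffAt_const (c := (0 : ℂ))).congr_of_eventuallyEq ?_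
    filter_upwards [hx] with y hy
    rw [hy, Pi.zero_apply, zero_div]

lemma exists_schwartz_mul_eq [NormedSpace ℝ E] [FiniteDimensional ℝ E] {g u : 𝓢(E, ℂ)} {r R : ℝ}
    (hr : ∀ x, ‖x‖ ≤ r → g x = 0) (hR : ∀ x, R ≤ ‖x‖ → g x = 0)
    (hu : ∀ x, r ≤ ‖x‖ → ‖x‖ ≤ R → u x ≠ 0) :
    ∃ θ : 𝓢(E, ℂ), (∀ x, ‖x‖ < r → θ x = 0) ∧ ∀ x, θ x * u x = g x := by
  have hsupp : HasCompactSupport fun x => g x / u x := by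
    refine HasCompactSupport.intro (isCompact_closedBall (0 : E) R) fun x hx => ?_
    rw [hR x (not_le.1 fun h => hx (mem_closedBall_zero_iff.2 h)).le, zero_div]
  have hcases (x : E) : u x ≠ 0 ∨ g =ᶠ[nhds x] 0 := by
    rcases lt_or_ge ‖x‖ r with hxr | hxr
    · right
      filter_upwards [(isOpen_lt continuous_norm continuous_const).mem_nhds hxr] with y hy
      exact hr y (le_of_lt hy)
    rcases lt_or_ge R ‖x‖ with hxR | hxR
    · right
      filter_upwards [(isOpen_lt continuous_const continuous_norm).mem_nhds hxR] with y hy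
      exact hR y (le_of_lt hy)
    · exact Or.inl (hu x hxr hxR)
  have hsmooth := contDiff_div_of_eventuallyEq_zero (g.smooth ⊤) (u.smooth ⊤) hcases
  refine ⟨hsupp.toSchwartzMap hsmooth, fun x hx => ?_, fun x => ?_⟩
  · change g x / u x = 0
    rw [hr x hx.le, zero_div]
  · change g x / u x * u x = g x
    rcases hcases x with hx | hx
    · exact div_mul_cancel₀ _ hx
    · rw [hx.eq_of_nhds, Pi.zero_apply, zero_div, zero_mul]

lemma exists_schwartz_mul_eq_sub_comp_two_smul [InnerProductSpace ℝ E] [FiniteDimensional ℝ E]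
    {u : 𝓢(E, ℂ)} {r R : ℝ} (hr : 0 < r) (hrR : r < R)
    (hu : ∀ x, r / 2 ≤ ‖x‖ → ‖x‖ ≤ R → u x ≠ 0) :
    ∃ χ θ : 𝓢(E, ℂ), (∀ x, ‖x‖ < r / 2 → χ x = 1) ∧ (∀ x, ‖x‖ < r / 2 → θ x = 0) ∧
      ∀ x, θ x * u x = χ x - χ ((2 : ℝ) • x) := by
  obtain ⟨χ, hχ1, hχ0⟩ := exists_schwartz_eq_one_eq_zero (E := E) hr hrR
  let g : 𝓢(E, ℂ) := χ - dilateCLM (Units.mk0 (2 : ℝ) two_ne_zero) χ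
  have hg (x : E) : g x = χ x - χ ((2 : ℝ) • x) := rfl
  have hnorm (x : E) : ‖(2 : ℝ) • x‖ = 2 * ‖x‖ := by rw [norm_smul, Real.norm_two]
  obtain ⟨θ, hθ, hθu⟩ := exists_schwartz_mul_eq (g := g) (r := r / 2)
    (fun x hx => by rw [hg, hχ1 _ (by linarith), hχ1 _ (by rw [hnorm]; linarith), sub_self])
    (fun x hx => by rw [hg, hχ0 _ hx, hχ0 _ (by rw [hnorm]; linarith), sub_self]) hu
  exact ⟨χ, θ, fun x hx => hχ1 x (by linarith), hθ, hθu⟩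

lemma exists_dyadicDilate_eq [NormedSpace ℝ E] {ψ : 𝓢(E, ℂ)} {ψs : ℕ → 𝓢(E, ℂ)} (h1 : ψs 1 = ψ)
    (h : ∀ j : ℕ, 2 ≤ j → ∀ x, ψs j x = ψ ((2 : ℝ) ^ (-(j : ℝ) + 1) • x)) :
    ∃ V : ℕ → 𝓢(E, ℂ), (∀ m, V (m + 1) = V 1) ∧ (∀ x, V 1 x = ψ ((2 : ℝ) • x)) ∧
      ∀ m, ψs m = dyadicDilate m (V m) := by
  let V : ℕ → 𝓢(E, ℂ)
    | 0 => ψs 0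
    | _ + 1 => dilateCLM (Units.mk0 (2 : ℝ) two_ne_zero) ψ
  have hV1 (m : ℕ) (x : E) : V (m + 1) x = ψ ((2 : ℝ) • x) := rfl
  refine ⟨V, fun _ => rfl, hV1 0, fun m => SchwartzMap.ext fun x => ?_⟩
  rw [dyadicDilate_apply]
  match m with
  | 0 => simp [V]
  | 1 => simp [hV1, h1]
  | m + 2 =>
    rw [h (m + 2) (by lia), hV1 (m + 1), smul_smul, Real.rpow_add two_pos, Real.rpow_neg two_pos.le,
      Real.rpow_one, Real.rpow_natCast, mul_comm]

end Cutoff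

section Main

open scoped SchwartzMap

lemma dampedSup_distConv_ne_top {V : ℕ → 𝓢(Rn n, ℂ)} (hV : ∀ m, V (m + 1) = V 1)
    (f : TemperedDist n) :
    ∃ A₀, ∀ A ≥ A₀, ∀ ν x,
      dampedSup A (fun m z => ‖distConv (𝓕 (dyadicDilate m (V m))) f z‖ₑ) ν x ≠ ∞ := by
  obtain ⟨A₀, N, C, hC, hgrowth⟩ := exists_norm_distConv_fourier_dyadicDilate_le f
  set D := C * (‖weightedJet N (V 0)‖ + ‖weightedJet N (V 1)‖)
  have hD (m : ℕ) : C * ‖weightedJet N (V m)‖ ≤ D := by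
    refine mul_le_mul_of_nonneg_left ?_ hC
    cases m with
    | zero => exact le_add_of_nonneg_right (norm_nonneg _)
    | succ m => rw [hV]; exact le_add_of_nonneg_left (norm_nonneg _)
  have hD0 : 0 ≤ D := by positivity
  refine ⟨A₀, fun A hA => dampedSup_ne_top_of_growth (D := ENNReal.ofReal D)
    ENNReal.ofReal_ne_top (fun m z => ?_) hA⟩
  rw [dyadicWeight, ← ENNReal.ofReal_pow (by positivity), ← ENNReal.ofReal_mul hD0, pow_zero,
    one_mul, ← ofReal_norm]
  refine ENNReal.ofReal_le_ofReal ((hgrowth m (V m) z).trans ?_)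
  gcongr
  exact hD m

lemma exists_enorm_distConv_rpow_le_dampedSum {V : ℕ → 𝓢(Rn n, ℂ)} (hV : ∀ m, V (m + 1) = V 1)
    {r R : ℝ} (hr : 0 < r) (hrR : r < R) (hV1 : ∀ x, r / 2 ≤ ‖x‖ → ‖x‖ ≤ R → V 1 x ≠ 0)
    {t : ℝ} (ht : 0 < t) (A : ℕ) :
    ∃ K : ℝ≥0∞, K ≠ ∞ ∧ ∀ (f : TemperedDist n) ν x,
      ‖distConv (𝓕 (dyadicDilate ν (V ν))) f x‖ₑ ^ t ≤
        K * dampedSum t A (fun m z => ‖distConv (𝓕 (dyadicDilate m (V m))) f z‖ₑ) ν x := by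
  obtain ⟨χ, θ, hχ, hθ, hθχ⟩ := exists_schwartz_mul_eq_sub_comp_two_smul hr hrR hV1
  choose C hC hrep using exists_enorm_distConv_le_dampedSum hV (half_pos hr) hχ hθ hθχ
  obtain ⟨K, hK, hsum⟩ := exists_rpow_le_dampedSum (E := Rn n) ht hC A
  exact ⟨K, hK, fun f => hsum _ (fun m => (continuous_distConv _ f).measurable.enorm)
    (fun A => hrep A f) (dampedSup_distConv_ne_top hV f)⟩

theorem statement15_general {al al1 C : ℝ} {w : ℕ → Rn n → ℝ}
    (hwC : ∀ j x y, 0 < w j x ∧ w j x ≤ C * w j y * (1 + 2 ^ j * ‖x - y‖) ^ al)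
    (hw1 : ∀ j x, 2 ^ al1 * w j x ≤ w (j + 1) x)
    {eps k : ℝ} (heps : 0 < eps) (hk1 : 1 < k) {psi1 : 𝓢(Rn n, ℂ)}
    (hpsi1 : ∀ x, eps ≤ ‖x‖ → ‖x‖ ≤ 2 * k * eps → 0 < ‖psi1 x‖) {psis : ℕ → 𝓢(Rn n, ℂ)}
    (hpsis1 : psis 1 = psi1)
    (hpsis : ∀ j : ℕ, 2 ≤ j → ∀ x, psis j x = psi1 ((2 : ℝ) ^ (-(j : ℝ) + 1) • x))
    {t : ℝ} (ht : 0 < t) {N : ℕ} {a : ℝ} (ha : 0 ≤ a) (haN : a ≤ N) :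
    ∃ c : ℝ, 0 < c ∧ ∀ (f : TemperedDist n) (ν : ℕ) (x : Rn n),
      (peetreMax a ν (distConv (SchwartzMap.fourierTransformCLM ℂ (psis ν)) f) x *
          ENNReal.ofReal (w ν x)) ^ t ≤
        ENNReal.ofReal c * ∑' j : ℕ,
          ENNReal.ofReal ((2 : ℝ) ^ (-(j : ℝ) * (N - a + al1) * t)) *
            lconv (etaK (ν + j) ((a - al) * t))
              (fun z =>
                ((‖distConv (SchwartzMap.fourierTransformCLM ℂ (psis (ν + j))) f z‖₊ : ℝ≥0∞) *
                    ENNReal.ofReal (w (ν + j) z)) ^ t) x := by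
  simp only [SchwartzMap.fourierTransformCLM_apply]
  obtain ⟨V, hV, hV1, hpsisV⟩ := exists_dyadicDilate_eq hpsis1 hpsis
  have hV1_ne (x : Rn n) (hx : eps / 2 ≤ ‖x‖) (hx' : ‖x‖ ≤ k * eps) : V 1 x ≠ 0 := by
    have hnorm : ‖(2 : ℝ) • x‖ = 2 * ‖x‖ := by rw [norm_smul, Real.norm_two]
    rw [hV1]
    exact norm_pos_iff.1 (hpsi1 _ (by linarith) (by linarith))
  obtain ⟨K, hK, hsum⟩ := exists_enorm_distConv_rpow_le_dampedSum hV heps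
    (lt_mul_of_one_lt_left heps hk1) hV1_ne ht N
  have hK' : K * ENNReal.ofReal (2 ^ a * C) ^ t ≠ ∞ :=
    mul_ne_top hK (ENNReal.rpow_ne_top_of_nonneg ht.le ENNReal.ofReal_ne_top)
  refine ⟨(K * ENNReal.ofReal (2 ^ a * C) ^ t).toReal + 1, by positivity, fun f ν x => ?_⟩
  simp only [hpsisV]
  refine (peetreMax_mul_weight_rpow_le hwC hw1 ht ha haN (hsum f) ν x).trans ?_
  gcongr
  exact (ENNReal.ofReal_toReal hK').ge.trans
    (ENNReal.ofReal_le_ofReal (le_add_of_nonneg_right zero_le_one))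

end Main

/-- the weighted pointwise estimate for the Peetre maximal function in
terms of convolutions with the kernels `η_{j,(a-α)t}`. -/
theorem statement15 (n : ℕ) (al al1 al2 C : ℝ) (h12 : al1 ≤ al2) (hal : 0 ≤ al)
    (w : ℕ → Rn n → ℝ) (hw : AdmissibleWeights al al1 al2 C w)
    (eps k : ℝ) (heps : 0 < eps) (hk1 : 1 < k) (hk2 : k ≤ 2)
    (psi0 psi1 : SchwartzMap (Rn n) ℂ)
    (hpsi0 : ∀ x : Rn n, ‖x‖ ≤ k * eps → 0 < ‖psi0 x‖)
    (hpsi1 : ∀ x : Rn n, eps ≤ ‖x‖ → ‖x‖ ≤ 2 * k * eps → 0 < ‖psi1 x‖)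
    (psis : ℕ → SchwartzMap (Rn n) ℂ)
    (hpsis0 : psis 0 = psi0) (hpsis1 : psis 1 = psi1)
    (hpsis : ∀ j : ℕ, 2 ≤ j → ∀ x : Rn n, psis j x = psi1 ((2 : ℝ) ^ (-(j : ℝ) + 1) • x))
    (t : ℝ) (ht : 0 < t) (N : ℕ) (a : ℝ) (ha : al < a) (haN : a ≤ N) :
    ∃ c : ℝ, 0 < c ∧ ∀ (f : TemperedDist n) (ν : ℕ) (x : Rn n),
      (peetreMax a ν (distConv (SchwartzMap.fourierTransformCLM ℂ (psis ν)) f) x *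
          ENNReal.ofReal (w ν x)) ^ t ≤
        ENNReal.ofReal c * ∑' j : ℕ,
          ENNReal.ofReal ((2 : ℝ) ^ (-(j : ℝ) * (N - a + al1) * t)) *
            lconv (etaK (ν + j) ((a - al) * t))
              (fun z =>
                ((‖distConv (SchwartzMap.fourierTransformCLM ℂ (psis (ν + j))) f z‖₊ : ℝ≥0∞) *
                    ENNReal.ofReal (w (ν + j) z)) ^ t) x :=
  statement15_general hw.2.1 (fun j x => (hw.2.2 j x).1) heps hk1 hpsi1 hpsis1 hpsis ht
    (hal.trans ha.le) haN

end
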